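/- arXiv:1212.2551 — 5 statements merged into one kernel-verified Lean document; each statement's English description precedes it below -/
import Mathlib

section
/- Let S ⊂ ℝ^8 be the set of 240 minimal vectors of the root lattice E_8, namely the 112 vectors (σ e_i + τ e_j)/√2 with 1 ≤ i < j ≤ 8 and σ, τ ∈ {+1, −1}, together with the 128 vectors (1/(2√2))(ε_1, …, ε_8) with ε_i ∈ {+1, −1} and ε_1 ε_2 ⋯ ε_8 = 1. Then S is redundantly extreme: for every x₀ ∈ S, the configuration S ∖ {x₀, −x₀} is perfect and eutactic. -/
open scoped RealInnerProductSpace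
open Metric MeasureTheory

noncomputable section

abbrev Euc (n : ℕ) := EuclideanSpace ℝ (Fin n)

/-- The rank-one symmetric map `P_x : y ↦ ⟪y, x⟫ • x`. -/
def projMap {F : Type*} [NormedAddCommGroup F] [InnerProductSpace ℝ F] (x : F) :
    F →ₗ[ℝ] F where
  toFun y := (⟪y, x⟫) • x
  map_add' y z := by simp [inner_add_left, add_smul]
  map_smul' c y := by simp [real_inner_smul_left, mul_smul]

/-- A configuration is perfect if the maps `P_x`, `x ∈ S`, span the symmetric maps. -/
def IsPerfectCfg {F : Type*} [NormedAddCommGroup F] [InnerProductSpace ℝ F]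
    (S : Set F) : Prop :=
  ∀ T : F →ₗ[ℝ] F, T.IsSymmetric → T ∈ Submodule.span ℝ (projMap '' S)

/-- A configuration is eutactic if `Id = Σ_{x∈S} υ_x P_x` with `υ_x > 0`, `υ_x = υ_{-x}`. -/
def IsEutacticCfg {F : Type*} [NormedAddCommGroup F] [InnerProductSpace ℝ F]
    (S : Set F) : Prop :=
  ∃ υ : F → ℝ, (∀ x ∈ S, 0 < υ x) ∧ (∀ x ∉ S, υ x = 0) ∧
    (Function.support υ).Finite ∧ (∀ x, υ x = υ (-x)) ∧
    ∑ᶠ x, υ x • projMap x = (LinearMap.id : F →ₗ[ℝ] F)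

/-- A configuration is semi-eutactic if `Id = Σ_{x∈S} υ_x P_x` with `υ_x ≥ 0`, `υ_x = υ_{-x}`. -/
def IsSemiEutacticCfg {F : Type*} [NormedAddCommGroup F] [InnerProductSpace ℝ F]
    (S : Set F) : Prop :=
  ∃ υ : F → ℝ, (∀ x ∈ S, 0 ≤ υ x) ∧ (∀ x ∉ S, υ x = 0) ∧
    (Function.support υ).Finite ∧ (∀ x, υ x = υ (-x)) ∧
    ∑ᶠ x, υ x • projMap x = (LinearMap.id : F →ₗ[ℝ] F)

/-- A configuration is extreme if it is perfect and eutactic. -/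
def IsExtremeCfg {F : Type*} [NormedAddCommGroup F] [InnerProductSpace ℝ F]
    (S : Set F) : Prop :=
  IsPerfectCfg S ∧ IsEutacticCfg S

/-- Hilbert–Schmidt (Frobenius) norm of a linear map on `ℝ^n`. -/
def frobNorm {n : ℕ} (T : Euc n →ₗ[ℝ] Euc n) : ℝ :=
  Real.sqrt (∑ j, ∑ i, (T (EuclideanSpace.single j 1) i) ^ 2)

/-- The lattice `T ℤ^n` as a set of points. -/
def latticeSet {n : ℕ} (T : Euc n →ₗ[ℝ] Euc n) : Set (Euc n) :=
  {v | ∃ z : Fin n → ℤ, v = T (∑ i, (z i : ℝ) • EuclideanSpace.single i 1)}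

/-- A set is an (n-dimensional) lattice if it is `T ℤ^n` for an invertible `T`. -/
def IsLattice {n : ℕ} (Λ : Set (Euc n)) : Prop :=
  ∃ T : Euc n →ₗ[ℝ] Euc n, LinearMap.det T ≠ 0 ∧ Λ = latticeSet T

/-- The determinant `d(Λ) = |det T|` of a lattice. -/
def latDet {n : ℕ} (Λ : Set (Euc n)) : ℝ :=
  sInf {d | ∃ T : Euc n →ₗ[ℝ] Euc n, Λ = latticeSet T ∧ d = |LinearMap.det T|}

/-- The metric `δ(Λ, Λ') = inf ‖T - T'‖` on the space of lattices. -/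
def latDist {n : ℕ} (Λ Λ' : Set (Euc n)) : ℝ :=
  sInf {d | ∃ T T' : Euc n →ₗ[ℝ] Euc n,
    Λ = latticeSet T ∧ Λ' = latticeSet T' ∧ d = frobNorm (T - T')}

/-- The minimal norm `m(Λ)`. -/
def minNorm {n : ℕ} (Λ : Set (Euc n)) : ℝ :=
  sInf {r | ∃ x ∈ Λ, x ≠ 0 ∧ r = ‖x‖ ^ 2}

/-- The set `S(Λ)` of minimal vectors of a lattice. -/
def minVecs {n : ℕ} (Λ : Set (Euc n)) : Set (Euc n) :=
  {x | x ∈ Λ ∧ x ≠ 0 ∧ ‖x‖ ^ 2 = minNorm Λ}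

/-- An origin-symmetric convex body. -/
structure IsSymCB {n : ℕ} (K : Set (Euc n)) : Prop where
  convex : Convex ℝ K
  compact : IsCompact K
  nonempty_interior : (interior K).Nonempty
  symm : -K = K

/-- A lattice is admissible for a body if it meets the interior only at the origin. -/
def IsAdmissible {n : ℕ} (Λ K : Set (Euc n)) : Prop :=
  Λ ∩ interior K ⊆ {0}

/-- The critical determinant `d_K`. -/
def critDet {n : ℕ} (K : Set (Euc n)) : ℝ :=
  sInf {d | ∃ Λ : Set (Euc n), IsLattice Λ ∧ IsAdmissible Λ K ∧ d = latDet Λ}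

/-- A critical lattice of `K`: an admissible lattice attaining the critical determinant. -/
def IsCriticalLattice {n : ℕ} (Λ K : Set (Euc n)) : Prop :=
  IsLattice Λ ∧ IsAdmissible Λ K ∧ latDet Λ = critDet K

/-- The optimal lattice packing fraction `φ(K) = 2⁻ⁿ vol(K) / d_K`. -/
def packFrac {n : ℕ} (K : Set (Euc n)) : ℝ :=
  (volume K).toReal / (2 ^ n * critDet K)

/-- The closed unit ball `Bⁿ`. -/
def unitBall (n : ℕ) : Set (Euc n) := Metric.closedBall 0 1

/-- The support function of a body. -/
def suppFn {n : ℕ} (K : Set (Euc n)) (x : Euc n) : ℝ :=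
  sSup ((fun y => ⟪x, y⟫) '' K)

/-- The radial function of a body. -/
def radFn {n : ℕ} (K : Set (Euc n)) (x : Euc n) : ℝ :=
  sSup {t : ℝ | 0 ≤ t ∧ t • x ∈ K}

/-- The 240 minimal vectors of the root lattice `E₈`: the 112 vectors `(σeᵢ + τeⱼ)/√2`
with `i ≠ j`, `σ, τ ∈ {±1}`, together with the 128 vectors `(1/(2√2))(ε₁, …, ε₈)` with
`εᵢ ∈ {±1}` and `ε₁ε₂⋯ε₈ = 1`. -/
def cfgE8 : Set (Euc 8) :=
  {v | ∃ i j : Fin 8, i ≠ j ∧ ∃ σ τ : ℝ, (σ = 1 ∨ σ = -1) ∧ (τ = 1 ∨ τ = -1) ∧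
      v = (Real.sqrt 2)⁻¹ •
        (σ • EuclideanSpace.single i 1 + τ • EuclideanSpace.single j 1)} ∪
  {v | ∃ ε : Fin 8 → ℝ, (∀ i, ε i = 1 ∨ ε i = -1) ∧ (∏ i, ε i) = 1 ∧
      v = (2 * Real.sqrt 2)⁻¹ • ∑ i, ε i • EuclideanSpace.single i 1}


/-- sign of a boolean -/
def sg (b : Bool) : ℝ := if b then 1 else -1

lemma sg_true : sg true = 1 := rfl
lemma sg_false : sg false = -1 := rfl
lemma sg_ne (b : Bool) : sg b ≠ 0 := by cases b <;> norm_num [sg]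
lemma sg_inj {a b : Bool} (h : sg a = sg b) : a = b := by
  cases a <;> cases b <;> first | rfl | (norm_num [sg] at h)
lemma exists_sg {r : ℝ} (h : r = 1 ∨ r = -1) : ∃ b, r = sg b := by
  rcases h with h | h
  · exact ⟨true, h⟩
  · exact ⟨false, h⟩
lemma sg_cases (b : Bool) : sg b = 1 ∨ sg b = -1 := by cases b <;> simp [sg]

def v1 (p : Fin 8 × Fin 8 × Bool × Bool) : Euc 8 :=
  (Real.sqrt 2)⁻¹ •
    (sg p.2.2.1 • EuclideanSpace.single p.1 1 + sg p.2.2.2 • EuclideanSpace.single p.2.1 1)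

abbrev B7 := Bool × Bool × Bool × Bool × Bool × Bool × Bool

def eps (p : B7) : Fin 8 → ℝ :=
  ![sg p.1, sg p.2.1, sg p.2.2.1, sg p.2.2.2.1, sg p.2.2.2.2.1, sg p.2.2.2.2.2.1,
    sg p.2.2.2.2.2.2,
    sg p.1 * sg p.2.1 * sg p.2.2.1 * sg p.2.2.2.1 * sg p.2.2.2.2.1 * sg p.2.2.2.2.2.1 *
    sg p.2.2.2.2.2.2]

def v2 (p : B7) : Euc 8 :=
  (2 * Real.sqrt 2)⁻¹ • ∑ i, eps p i • EuclideanSpace.single i 1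

lemma sqrt2_ne : (Real.sqrt 2)⁻¹ ≠ 0 := by positivity

lemma v1_apply (p) (k : Fin 8) : v1 p k = (Real.sqrt 2)⁻¹ *
    ((if k = p.1 then sg p.2.2.1 else 0) + (if k = p.2.1 then sg p.2.2.2 else 0)) := by
  simp [v1, mul_add]

lemma v2_apply (p) (k : Fin 8) : v2 p k = (2 * Real.sqrt 2)⁻¹ * eps p k := by
  simp [v2, Pi.single_apply]

lemma inner_v1 (p) (y : Euc 8) : ⟪v1 p, y⟫ = (Real.sqrt 2)⁻¹ *
    (sg p.2.2.1 * y p.1 + sg p.2.2.2 * y p.2.1) := by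
  simp [v1, mul_add, inner_add_left, real_inner_smul_left, EuclideanSpace.inner_single_left]

lemma inner_v2 (p) (y : Euc 8) : ⟪v2 p, y⟫ = (2 * Real.sqrt 2)⁻¹ *
    ∑ i, eps p i * y i := by
  simp [v2, sum_inner, real_inner_smul_left, EuclideanSpace.inner_single_left]

lemma sqrt2_sq : (Real.sqrt 2)⁻¹ ^ 2 = 1 / 2 := by
  rw [inv_pow, Real.sq_sqrt (by norm_num)]; norm_num
lemma sqrt2_four : (Real.sqrt 2)⁻¹ ^ 4 = 1 / 4 := by
  rw [show (4:ℕ) = 2 * 2 from rfl, pow_mul, sqrt2_sq]; norm_num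
lemma tsqrt2_sq : (2 * Real.sqrt 2)⁻¹ ^ 2 = 1 / 8 := by
  rw [mul_inv, mul_pow, sqrt2_sq]; norm_num
lemma tsqrt2_four : (2 * Real.sqrt 2)⁻¹ ^ 4 = 1 / 64 := by
  rw [mul_inv, mul_pow, sqrt2_four]; norm_num

lemma norm_sq8 (y : Euc 8) : ‖y‖ ^ 2 = ∑ i, y i ^ 2 := by
  simp [EuclideanSpace.norm_sq_eq]

open Classical in
def F1 : Finset (Euc 8) :=
  (Finset.univ.filter fun p : Fin 8 × Fin 8 × Bool × Bool => p.1 < p.2.1).image v1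
open Classical in
def F2 : Finset (Euc 8) := Finset.univ.image v2
open Classical in
def SF : Finset (Euc 8) := F1 ∪ F2

lemma v1_supp {p k} (hp : p.1 < p.2.1) (h : v1 p k ≠ 0) : k = p.1 ∨ k = p.2.1 := by
  rw [v1_apply] at h
  by_contra! hc
  simp [hc.1, hc.2] at h

lemma v1_fst {p} (hp : p.1 < p.2.1) : v1 p p.1 = (Real.sqrt 2)⁻¹ * sg p.2.2.1 := by
  rw [v1_apply]; simp [hp.ne]
lemma v1_snd {p} (hp : p.1 < p.2.1) : v1 p p.2.1 = (Real.sqrt 2)⁻¹ * sg p.2.2.2 := by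
  rw [v1_apply]; simp [hp.ne']

lemma v1_inj {p q} (hp : p.1 < p.2.1) (hq : q.1 < q.2.1) (h : v1 p = v1 q) : p = q := by
  have a1 := v1_supp (p := q) (k := p.1) hq
    (by rw [← h, v1_fst hp]; exact mul_ne_zero sqrt2_ne (sg_ne _))
  have a2 := v1_supp (p := q) (k := p.2.1) hq
    (by rw [← h, v1_snd hp]; exact mul_ne_zero sqrt2_ne (sg_ne _))
  have e1 : p.1 = q.1 := by omega
  have e2 : p.2.1 = q.2.1 := by omega
  have s1 := v1_fst hp
  rw [h, e1, v1_fst hq] at s1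
  have s2 := v1_snd hp
  rw [h, e2, v1_snd hq] at s2
  have t1 := sg_inj (mul_left_cancel₀ sqrt2_ne s1)
  have t2 := sg_inj (mul_left_cancel₀ sqrt2_ne s2)
  exact Prod.ext e1 (Prod.ext e2 (Prod.ext t1.symm t2.symm))

lemma v2_inj {p q} (h : v2 p = v2 q) : p = q := by
  have key : ∀ k, eps p k = eps q k := fun k => by
    have := congrArg (fun v : Euc 8 => v k) h
    simp only [v2_apply] at this
    exact mul_left_cancel₀ (by positivity) this
  have h0 := key 0
  have h1 := key 1
  have h2 := key 2
  have h3 := key 3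
  have h4 := key 4
  have h5 := key 5
  have h6 := key 6
  exact Prod.ext (sg_inj h0) (Prod.ext (sg_inj h1) (Prod.ext (sg_inj h2) (Prod.ext (sg_inj h3)
    (Prod.ext (sg_inj h4) (Prod.ext (sg_inj h5) (sg_inj h6))))))

lemma eps_cases (p : B7) (i) : eps p i = 1 ∨ eps p i = -1 := by
  obtain ⟨a, b, c, d, e, f, g⟩ := p
  fin_cases i <;> simp only [eps, Fin.reduceFinMk, Matrix.cons_val] <;> try exact sg_cases _
  have hm : ∀ x y : ℝ, (x = 1 ∨ x = -1) → (y = 1 ∨ y = -1) → (x * y = 1 ∨ x * y = -1) := by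
    rintro x y (rfl | rfl) (rfl | rfl) <;> norm_num
  exact hm _ _ (hm _ _ (hm _ _ (hm _ _ (hm _ _ (hm _ _ (sg_cases _) (sg_cases _)) (sg_cases _))
    (sg_cases _)) (sg_cases _)) (sg_cases _)) (sg_cases _)

lemma sg_sq (b : Bool) : sg b * sg b = 1 := by cases b <;> norm_num [sg]

lemma eps_prod (p : B7) : ∏ i, eps p i = 1 := by
  have h : ∏ i, eps p i = (sg p.1 * sg p.1) * (sg p.2.1 * sg p.2.1) *
    (sg p.2.2.1 * sg p.2.2.1) * (sg p.2.2.2.1 * sg p.2.2.2.1) *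
    (sg p.2.2.2.2.1 * sg p.2.2.2.2.1) * (sg p.2.2.2.2.2.1 * sg p.2.2.2.2.2.1) *
    (sg p.2.2.2.2.2.2 * sg p.2.2.2.2.2.2) := by
    simp only [Fin.prod_univ_eight, eps, Matrix.cons_val]
    ring
  rw [h]; simp only [sg_sq]; norm_num

lemma disj : Disjoint F1 F2 := by
  rw [Finset.disjoint_left]
  intro x h1 h2
  simp only [F1, F2, Finset.mem_image, Finset.mem_filter, Finset.mem_univ, true_and] at h1 h2
  obtain ⟨p, hp, rfl⟩ := h1
  obtain ⟨q, hq⟩ := h2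
  obtain ⟨k, hk1, hk2⟩ : ∃ k : Fin 8, k ≠ p.1 ∧ k ≠ p.2.1 := by
    generalize p.1 = a
    generalize p.2.1 = b
    revert a b
    decide
  have := congrArg (fun v : Euc 8 => v k) hq
  simp only [v2_apply, v1_apply, if_neg hk1, if_neg hk2, add_zero, mul_zero] at this
  rcases mul_eq_zero.1 this with h | h
  · exact absurd h (by positivity)
  · rcases eps_cases q k with h' | h' <;> rw [h'] at h <;> norm_num at h

lemma mem_SF (x : Euc 8) : x ∈ SF ↔ x ∈ cfgE8 := by
  simp only [SF, F1, F2, Finset.mem_union, Finset.mem_image, Finset.mem_filter, Finset.mem_univ,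
    true_and, cfgE8, Set.mem_union, Set.mem_ofPred_eq]
  constructor
  · rintro (⟨p, hp, rfl⟩ | ⟨p, rfl⟩)
    · exact Or.inl ⟨p.1, p.2.1, hp.ne, _, _, sg_cases _, sg_cases _, rfl⟩
    · exact Or.inr ⟨eps p, eps_cases p, eps_prod p, rfl⟩
  · rintro (⟨i, j, hij, σ, τ, hs, ht, rfl⟩ | ⟨ε, he, hp, rfl⟩)
    · left
      obtain ⟨s, rfl⟩ := exists_sg hs
      obtain ⟨t, rfl⟩ := exists_sg ht
      rcases lt_or_gt_of_ne hij with h | h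
      · exact ⟨(i, j, s, t), h, rfl⟩
      · exact ⟨(j, i, t, s), h, by simp only [v1]; rw [add_comm]⟩
    · right
      choose s hs using fun i => exists_sg (he i)
      refine ⟨(s 0, s 1, s 2, s 3, s 4, s 5, s 6), ?_⟩
      have : eps (s 0, s 1, s 2, s 3, s 4, s 5, s 6) = ε := by
        have h7 : ε 0 * ε 1 * ε 2 * ε 3 * ε 4 * ε 5 * ε 6 = ε 7 := by
          rw [Fin.prod_univ_eight] at hp
          rcases he 7 with h | h <;> rw [h] at hp ⊢ <;> linarith
        funext k
        fin_cases k <;> simp only [eps, Fin.reduceFinMk, Matrix.cons_val, ← hs, h7] <;> rfl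
      rw [v2, this]

lemma sum_SF (f : Euc 8 → ℝ) : ∑ x ∈ SF, f x =
    (∑ i : Fin 8, ∑ j : Fin 8, if i < j then ∑ s, ∑ t, f (v1 (i, j, s, t)) else 0) +
    ∑ p, f (v2 p) := by
  rw [SF, Finset.sum_union disj, F1, F2, Finset.sum_image, Finset.sum_image]
  · congr 1
    rw [Finset.sum_filter, Fintype.sum_prod_type]
    refine Finset.sum_congr rfl fun i _ => ?_
    rw [Fintype.sum_prod_type]
    refine Finset.sum_congr rfl fun j _ => ?_
    split_ifs with h
    · simp only [h, if_true, Fintype.sum_prod_type]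
    · simp [h]
  · intro a _ b _ h; exact v2_inj h
  · intro a ha b hb h
    simp at ha hb
    exact v1_inj ha hb h

lemma step4 (a p D E F G H : ℝ) (hp : p = 1 ∨ p = -1) :
    ∑ d, ∑ e, ∑ f, ∑ g, (a + sg d * D + sg e * E + sg f * F + sg g * G +
      p * sg d * sg e * sg f * sg g * H) ^ 4 =
    16 * (3 * (a ^ 2 + D ^ 2 + E ^ 2 + F ^ 2 + G ^ 2 + H ^ 2) ^ 2 -
      2 * (a ^ 4 + D ^ 4 + E ^ 4 + F ^ 4 + G ^ 4 + H ^ 4)) := by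
  simp only [Fintype.sum_bool, sg_true, sg_false]
  rcases hp with rfl | rfl <;> ring

lemma step2 (a p D E F G H : ℝ) (hp : p = 1 ∨ p = -1) :
    ∑ d, ∑ e, ∑ f, ∑ g, (a + sg d * D + sg e * E + sg f * F + sg g * G +
      p * sg d * sg e * sg f * sg g * H) ^ 2 =
    16 * (a ^ 2 + D ^ 2 + E ^ 2 + F ^ 2 + G ^ 2 + H ^ 2) := by
  simp only [Fintype.sum_bool, sg_true, sg_false]
  rcases hp with rfl | rfl <;> ring

lemma sg_mul3 (a b c : Bool) : sg a * sg b * sg c = 1 ∨ sg a * sg b * sg c = -1 := by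
  cases a <;> cases b <;> cases c <;> norm_num [sg]

lemma sum_v2_four (y : Fin 8 → ℝ) : ∑ p, (∑ i, eps p i * y i) ^ 4 =
    128 * (3 * (∑ i, y i ^ 2) ^ 2 - 2 * ∑ i, y i ^ 4) := by
  simp only [Fin.sum_univ_eight, Fintype.sum_prod_type, eps, Matrix.cons_val]
  have h := fun a b c => step4 (sg a * y 0 + sg b * y 1 + sg c * y 2) (sg a * sg b * sg c)
    (y 3) (y 4) (y 5) (y 6) (y 7) (sg_mul3 a b c)
  simp only [h]
  simp only [Fintype.sum_bool, sg_true, sg_false]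
  ring

lemma sum_v2_two (y : Fin 8 → ℝ) : ∑ p, (∑ i, eps p i * y i) ^ 2 =
    128 * ∑ i, y i ^ 2 := by
  simp only [Fin.sum_univ_eight, Fintype.sum_prod_type, eps, Matrix.cons_val]
  have h := fun a b c => step2 (sg a * y 0 + sg b * y 1 + sg c * y 2) (sg a * sg b * sg c)
    (y 3) (y 4) (y 5) (y 6) (y 7) (sg_mul3 a b c)
  simp only [h]
  simp only [Fintype.sum_bool, sg_true, sg_false]
  ring

lemma quad (y : Euc 8) : ∑ x ∈ SF, ⟪x, y⟫ ^ 2 = 30 * ‖y‖ ^ 2 := by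
  rw [sum_SF, norm_sq8]
  simp only [inner_v1, inner_v2, mul_pow, sqrt2_sq, tsqrt2_sq, ← Finset.mul_sum, sum_v2_two]
  simp only [Fin.sum_univ_eight, Fintype.sum_bool, sg_true, sg_false]
  simp
  ring

lemma quartic (y : Euc 8) : ∑ x ∈ SF, ⟪x, y⟫ ^ 4 = 9 * (‖y‖ ^ 2) ^ 2 := by
  rw [sum_SF, norm_sq8]
  simp only [inner_v1, inner_v2, mul_pow, sqrt2_four, tsqrt2_four, ← Finset.mul_sum, sum_v2_four]
  simp only [Fin.sum_univ_eight, Fintype.sum_bool, sg_true, sg_false]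
  simp
  ring

lemma f22 (y z : Euc 8) : ∑ x ∈ SF, ⟪x, y⟫ ^ 2 * ⟪x, z⟫ ^ 2 =
    3 * (‖y‖ ^ 2 * ‖z‖ ^ 2 + 2 * ⟪y, z⟫ ^ 2) := by
  have h1 := quartic (y + z)
  have h2 := quartic (y - z)
  have h3 := quartic y
  have h4 := quartic z
  have e : ∑ x ∈ SF, ⟪x, y⟫ ^ 2 * ⟪x, z⟫ ^ 2 =
    (1 / 12) * (∑ x ∈ SF, ⟪x, y + z⟫ ^ 4 + ∑ x ∈ SF, ⟪x, y - z⟫ ^ 4 - 2 * ∑ x ∈ SF, ⟪x, y⟫ ^ 4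
      - 2 * ∑ x ∈ SF, ⟪x, z⟫ ^ 4) := by
    rw [Finset.mul_sum, Finset.mul_sum, ← Finset.sum_add_distrib, ← Finset.sum_sub_distrib,
      ← Finset.sum_sub_distrib, Finset.mul_sum]
    refine Finset.sum_congr rfl fun x _ => ?_
    rw [inner_add_right, inner_sub_right]
    ring
  rw [e, h1, h2, h3, h4, norm_add_sq_real, norm_sub_sq_real]
  ring

lemma f211 (y z w : Euc 8) : ∑ x ∈ SF, ⟪x, y⟫ ^ 2 * (⟪x, z⟫ * ⟪x, w⟫) =
    3 * (‖y‖ ^ 2 * ⟪z, w⟫ + 2 * (⟪y, z⟫ * ⟪y, w⟫)) := by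
  have h1 := f22 y (z + w)
  have h2 := f22 y (z - w)
  have e : ∑ x ∈ SF, ⟪x, y⟫ ^ 2 * (⟪x, z⟫ * ⟪x, w⟫) =
    (1 / 4) * (∑ x ∈ SF, ⟪x, y⟫ ^ 2 * ⟪x, z + w⟫ ^ 2 - ∑ x ∈ SF, ⟪x, y⟫ ^ 2 * ⟪x, z - w⟫ ^ 2) := by
    rw [← Finset.sum_sub_distrib, Finset.mul_sum]
    refine Finset.sum_congr rfl fun x _ => ?_
    rw [inner_add_right, inner_sub_right]
    ring
  rw [e, h1, h2, norm_add_sq_real, norm_sub_sq_real, inner_add_right, inner_sub_right]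
  ring

lemma f11 (z w : Euc 8) : ∑ x ∈ SF, ⟪x, z⟫ * ⟪x, w⟫ = 30 * ⟪z, w⟫ := by
  have h1 := quad (z + w)
  have h2 := quad (z - w)
  have e : ∑ x ∈ SF, ⟪x, z⟫ * ⟪x, w⟫ =
    (1 / 4) * (∑ x ∈ SF, ⟪x, z + w⟫ ^ 2 - ∑ x ∈ SF, ⟪x, z - w⟫ ^ 2) := by
    rw [← Finset.sum_sub_distrib, Finset.mul_sum]
    refine Finset.sum_congr rfl fun x _ => ?_
    rw [inner_add_right, inner_sub_right]
    ring
  rw [e, h1, h2, norm_add_sq_real, norm_sub_sq_real]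
  ring

lemma projMap_apply' (x y : Euc 8) : projMap x y = ⟪y, x⟫ • x := rfl

lemma design2 : ∑ x ∈ SF, projMap x = (30 : ℝ) • (LinearMap.id : Euc 8 →ₗ[ℝ] Euc 8) := by
  refine LinearMap.ext fun z => ext_inner_right ℝ fun w => ?_
  rw [LinearMap.sum_apply, sum_inner, LinearMap.smul_apply, LinearMap.id_apply,
    real_inner_smul_left, ← f11]
  refine Finset.sum_congr rfl fun x _ => ?_
  rw [projMap_apply', real_inner_smul_left, real_inner_comm]

lemma design4 (y : Euc 8) : ∑ x ∈ SF, ⟪x, y⟫ ^ 2 • projMap x =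
    (3 * ‖y‖ ^ 2) • (LinearMap.id : Euc 8 →ₗ[ℝ] Euc 8) + (6 : ℝ) • projMap y := by
  refine LinearMap.ext fun z => ext_inner_right ℝ fun w => ?_
  have h := f211 y z w
  rw [LinearMap.sum_apply, sum_inner, LinearMap.add_apply, LinearMap.smul_apply,
    LinearMap.smul_apply, LinearMap.id_apply, inner_add_left, real_inner_smul_left,
    real_inner_smul_left, projMap_apply', real_inner_smul_left, real_inner_comm y z]
  rw [show 3 * ‖y‖ ^ 2 * ⟪z, w⟫ + 6 * (⟪y, z⟫ * ⟪y, w⟫) =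
    3 * (‖y‖ ^ 2 * ⟪z, w⟫ + 2 * (⟪y, z⟫ * ⟪y, w⟫)) by ring, ← h]
  refine Finset.sum_congr rfl fun x _ => ?_
  rw [LinearMap.smul_apply, projMap_apply', real_inner_smul_left, real_inner_smul_left,
    real_inner_comm x z]

lemma projMap_neg (x : Euc 8) : projMap (-x) = projMap x := by
  refine LinearMap.ext fun z => ?_
  simp [projMap_apply']

lemma norm_SF {x : Euc 8} (hx : x ∈ SF) : ‖x‖ ^ 2 = 1 := by
  simp only [SF, F1, F2, Finset.mem_union, Finset.mem_image, Finset.mem_filter, Finset.mem_univ,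
    true_and] at hx
  rcases hx with ⟨p, hp, rfl⟩ | ⟨p, rfl⟩
  · rw [← real_inner_self_eq_norm_sq, inner_v1, v1_fst hp, v1_snd hp]
    linear_combination (sg p.2.2.1 * sg p.2.2.1 + sg p.2.2.2 * sg p.2.2.2) * sqrt2_sq +
      (1 / 2) * sg_sq p.2.2.1 + (1 / 2) * sg_sq p.2.2.2
  · rw [norm_sq8]
    have : ∀ i, v2 p i ^ 2 = 1 / 8 := fun i => by
      rw [v2_apply, mul_pow, tsqrt2_sq]
      rcases eps_cases p i with h | h <;> rw [h] <;> norm_num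
    simp [this]

lemma neg_SF {x : Euc 8} (hx : x ∈ SF) : -x ∈ SF := by
  rw [mem_SF] at hx ⊢
  have hn : ∀ r : ℝ, (r = 1 ∨ r = -1) → (-r = 1 ∨ -r = -1) := by
    rintro r (rfl | rfl) <;> norm_num
  rcases hx with ⟨i, j, hij, σ, τ, hs, ht, rfl⟩ | ⟨ε, he, hp, rfl⟩
  · refine Or.inl ⟨i, j, hij, -σ, -τ, hn _ hs, hn _ ht, ?_⟩
    rw [← smul_neg, neg_add, neg_smul, neg_smul]
  · refine Or.inr ⟨fun i => -ε i, fun i => hn _ (he i), ?_, ?_⟩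
    · rw [Fin.prod_univ_eight] at hp ⊢
      rw [← hp]; ring
    · rw [← smul_neg, ← Finset.sum_neg_distrib]
      simp only [neg_smul]

open Classical in
def RF (x₀ : Euc 8) : Finset (Euc 8) := (SF.erase x₀).erase (-x₀)

lemma mem_RF (x₀ x : Euc 8) : x ∈ RF x₀ ↔ x ∈ cfgE8 \ {x₀, -x₀} := by
  simp only [RF, Finset.mem_erase, mem_SF, Set.mem_sdiff, Set.mem_insert_iff,
    Set.mem_singleton_iff]
  tauto

lemma sum_RF {x₀ : Euc 8} (h : x₀ ∈ SF) (c : Euc 8 → ℝ) (hc : c (-x₀) = c x₀) :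
    ∑ x ∈ RF x₀, c x • projMap x = ∑ x ∈ SF, c x • projMap x - (2 * c x₀) • projMap x₀ := by
  classical
  have hne : -x₀ ≠ x₀ := by
    intro e
    have h0 : x₀ = 0 := by
      have h2 : (2 : ℝ) • x₀ = 0 := by
        rw [two_smul]; nth_rewrite 1 [← e]; exact neg_add_cancel x₀
      exact (smul_eq_zero.1 h2).resolve_left two_ne_zero
    have := norm_SF h
    rw [h0] at this
    norm_num at this
  have h2 : -x₀ ∈ SF.erase x₀ := Finset.mem_erase.2 ⟨hne, neg_SF h⟩
  rw [← Finset.add_sum_erase SF _ h, ← Finset.add_sum_erase (SF.erase x₀) _ h2, hc, projMap_neg,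
    RF]
  module

lemma rf2 {x₀ : Euc 8} (h : x₀ ∈ SF) : ∑ x ∈ RF x₀, (1 : ℝ) • projMap x =
    (30 : ℝ) • LinearMap.id - (2 : ℝ) • projMap x₀ := by
  rw [sum_RF h (fun _ => 1) rfl]
  simp only [one_smul, design2, mul_one]

lemma rf4 {x₀ : Euc 8} (h : x₀ ∈ SF) (y : Euc 8) : ∑ x ∈ RF x₀, ⟪x, y⟫ ^ 2 • projMap x =
    (3 * ‖y‖ ^ 2) • LinearMap.id + (6 : ℝ) • projMap y - (2 * ⟪x₀, y⟫ ^ 2) • projMap x₀ := by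
  rw [sum_RF h (fun x => ⟪x, y⟫ ^ 2) (by simp), design4]

lemma inner_self_SF {x : Euc 8} (h : x ∈ SF) : ⟪x, x⟫ = 1 := by
  rw [real_inner_self_eq_norm_sq, norm_SF h]

lemma perfect {x₀ : Euc 8} (h : x₀ ∈ SF) : IsPerfectCfg (cfgE8 \ {x₀, -x₀}) := by
  set W := Submodule.span ℝ (projMap '' (cfgE8 \ {x₀, -x₀})) with hW
  have hsum : ∀ c : Euc 8 → ℝ, ∑ x ∈ RF x₀, c x • projMap x ∈ W := fun c =>
    Submodule.sum_mem _ fun x hx => Submodule.smul_mem _ _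
      (Submodule.subset_span ⟨x, (mem_RF _ _).1 hx, rfl⟩)
  have h1 := hsum fun _ => 1
  rw [rf2 h] at h1
  have h2 := hsum fun x => ⟪x, x₀⟫ ^ 2
  rw [rf4 h, norm_SF h, inner_self_SF h] at h2
  have hid : (LinearMap.id : Euc 8 →ₗ[ℝ] Euc 8) ∈ W := by
    have := W.add_mem (W.smul_mem (2 / 63) h1) (W.smul_mem (1 / 63) h2)
    convert this using 1
    module
  have hp : projMap x₀ ∈ W := by
    have := W.sub_mem (W.smul_mem 15 hid) (W.smul_mem (1 / 2) h1)
    convert this using 1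
    module
  have hall : ∀ y, projMap y ∈ W := fun y => by
    have h3 := hsum fun x => ⟪x, y⟫ ^ 2
    rw [rf4 h] at h3
    have := W.smul_mem (1 / 6) (W.add_mem (W.sub_mem h3 (W.smul_mem (3 * ‖y‖ ^ 2) hid))
      (W.smul_mem (2 * ⟪x₀, y⟫ ^ 2) hp))
    convert this using 1
    module
  intro T hT
  have hn : Module.finrank ℝ (Euc 8) = 8 := by simp
  have e : T = ∑ i, hT.eigenvalues hn i • projMap (hT.eigenvectorBasis hn i) := by
    refine (hT.eigenvectorBasis hn).toBasis.ext fun j => ?_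
    rw [OrthonormalBasis.coe_toBasis, hT.apply_eigenvectorBasis, LinearMap.sum_apply,
      Finset.sum_eq_single j]
    · rw [LinearMap.smul_apply, projMap_apply', real_inner_self_eq_norm_sq,
        OrthonormalBasis.norm_eq_one]
      simp
    · intro i _ hij
      rw [LinearMap.smul_apply, projMap_apply',
        (hT.eigenvectorBasis hn).orthonormal.2 (Ne.symm hij)]
      simp
    · simp
  rw [e]
  exact Submodule.sum_mem _ fun i _ => Submodule.smul_mem _ _ (hall _)

lemma eutactic {x₀ : Euc 8} (h : x₀ ∈ SF) : IsEutacticCfg (cfgE8 \ {x₀, -x₀}) := by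
  classical
  have hneg : ∀ x, x ∈ RF x₀ → -x ∈ RF x₀ := fun x hx => by
    simp only [RF, Finset.mem_erase] at hx ⊢
    exact ⟨fun e => hx.2.1 (neg_injective e), fun e => hx.1 (by rw [← e, neg_neg]),
      neg_SF hx.2.2⟩
  have hsupp : (Function.support fun x => if x ∈ RF x₀ then (2 + ⟪x, x₀⟫ ^ 2) / 63 else 0) ⊆
      (RF x₀ : Set (Euc 8)) := fun x hx => by
    by_contra hc
    have hc' : x ∉ RF x₀ := hc
    simp [hc'] at hx
  refine ⟨fun x => if x ∈ RF x₀ then (2 + ⟪x, x₀⟫ ^ 2) / 63 else 0, ?_, ?_, ?_, ?_, ?_⟩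
  · intro x hx
    simp only [(mem_RF x₀ x).2 hx, if_true]
    positivity
  · intro x hx
    have : x ∉ RF x₀ := fun h => hx ((mem_RF x₀ x).1 h)
    simp only [this, if_false]
  · exact (RF x₀).finite_toSet.subset hsupp
  · intro x
    have : x ∈ RF x₀ ↔ -x ∈ RF x₀ := ⟨hneg x, fun h => by simpa using hneg _ h⟩
    simp only [← this, inner_neg_left, neg_sq]
  · rw [finsum_eq_sum_of_support_subset (s := RF x₀)]
    · have e : ∀ x ∈ RF x₀, (if x ∈ RF x₀ then (2 + ⟪x, x₀⟫ ^ 2) / 63 else 0) • projMap x =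
          (2 / 63 : ℝ) • ((1 : ℝ) • projMap x) + (1 / 63 : ℝ) • (⟪x, x₀⟫ ^ 2 • projMap x) := by
        intro x hx
        rw [if_pos hx]
        module
      rw [Finset.sum_congr rfl e, Finset.sum_add_distrib,
        ← Finset.smul_sum (r := (2 / 63 : ℝ)), ← Finset.smul_sum (r := (1 / 63 : ℝ)), rf2 h, rf4 h, norm_SF h, inner_self_SF h]
      module
    · exact (Function.support_smul_subset_left _ _).trans hsupp

/-- Lemma 3.1, `E₈` case: the configuration of minimal vectors of `E₈`
is redundantly extreme. -/
theorem cfgE8_redundantly_extreme :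
    ∀ x₀ ∈ cfgE8, IsPerfectCfg (cfgE8 \ {x₀, -x₀}) ∧ IsEutacticCfg (cfgE8 \ {x₀, -x₀}) := by
  intro x₀ hx
  have h := (mem_SF x₀).2 hx
  exact ⟨perfect h, eutactic h⟩

end
end

section
/- Let n ≥ 2 and suppose Λ₀ is a critical lattice of the unit ball B^n which is unique up to rotation, with m(Λ₀) = 1, and suppose the configuration S(Λ₀) of minimal vectors is minimally extreme with eutaxy coefficients υ_x. Then there exist ε > 0 and C > 0 such that for every origin-symmetric convex body K with (1−ε)B^n ⊆ K ⊆ (1+ε)B^n there is a lattice Λ admissible for K satisfying d(Λ)/d(Λ₀) ≤ 1 + Σ_{x∈S(Λ₀)} υ_x (h_K(x) − 1) + C · max_{x∈S(Λ₀)} |h_K(x) − 1|², where h_K(x) = max_{y∈K} ⟨x, y⟩ is the support function of K. -/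
open scoped RealInnerProductSpace
open Metric MeasureTheory

noncomputable section

section Helpers

variable {n : ℕ}

/-- The symmetric map attached to a function on unordered pairs of indices. -/
def symEnd (n : ℕ) : (Sym2 (Fin n) → ℝ) →ₗ[ℝ] (Euc n →ₗ[ℝ] Euc n) where
  toFun f := Matrix.toEuclideanLin (Matrix.of fun i j => f s(i, j))
  map_add' f g := by
    rw [← map_add]; rfl
  map_smul' c f := by
    rw [RingHom.id_apply, ← map_smul]; rfl

lemma symEnd_symm (f : Sym2 (Fin n) → ℝ) : (symEnd n f).IsSymmetric := by
  refine Matrix.isSymmetric_toEuclideanLin_iff.mpr ?_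
  ext i j
  simp [Matrix.conjTranspose_apply, Sym2.eq_swap]

lemma symEnd_inj (f : Sym2 (Fin n) → ℝ) (h : symEnd n f = 0) : f = 0 := by
  have h' : (Matrix.of fun i j => f s(i, j) : Matrix (Fin n) (Fin n) ℝ) = 0 := by
    apply Matrix.toEuclideanLin.injective
    rw [map_zero]; exact h
  funext p
  induction p using Sym2.ind with
  | _ i j => exact congrFun (congrFun h' i) j

/-- The trace pairing of `M` with `T`. -/
def trPair (M : Euc n →ₗ[ℝ] Euc n) : (Euc n →ₗ[ℝ] Euc n) →ₗ[ℝ] ℝ :=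
  LinearMap.trace ℝ (Euc n) ∘ₗ LinearMap.mulLeft ℝ (A := Module.End ℝ (Euc n)) M

lemma trPair_apply (M T : Euc n →ₗ[ℝ] Euc n) :
    trPair M T = LinearMap.trace ℝ (Euc n) (M ∘ₗ T) := rfl

lemma trPair_proj (M : Euc n →ₗ[ℝ] Euc n) (x : Euc n) :
    trPair M (projMap x) = ⟪x, M x⟫ := by
  rw [trPair_apply, LinearMap.trace_eq_sum_inner _ (EuclideanSpace.basisFun (Fin n) ℝ)]
  have h := (EuclideanSpace.basisFun (Fin n) ℝ).sum_repr' x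
  have : ∀ i, ⟪(EuclideanSpace.basisFun (Fin n) ℝ) i, (M ∘ₗ projMap x)
      ((EuclideanSpace.basisFun (Fin n) ℝ) i)⟫
      = ⟪⟪(EuclideanSpace.basisFun (Fin n) ℝ) i, x⟫ •
        (EuclideanSpace.basisFun (Fin n) ℝ) i, M x⟫ := by
    intro i
    simp only [LinearMap.comp_apply, projMap, LinearMap.coe_mk, AddHom.coe_mk, map_smul,
      real_inner_smul_left, real_inner_smul_right]
  rw [Finset.sum_congr rfl fun i _ => this i, ← sum_inner, h]

lemma sym_zero_of_trace (M : Euc n →ₗ[ℝ] Euc n) (hM : M.IsSymmetric)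
    (h : trPair M M = 0) : M = 0 := by
  rw [trPair_apply, LinearMap.trace_eq_sum_inner _ (EuclideanSpace.basisFun (Fin n) ℝ)] at h
  have h2 : ∀ i, ⟪(EuclideanSpace.basisFun (Fin n) ℝ) i, (M ∘ₗ M)
      ((EuclideanSpace.basisFun (Fin n) ℝ) i)⟫ =
      ‖M ((EuclideanSpace.basisFun (Fin n) ℝ) i)‖ ^ 2 := by
    intro i
    rw [LinearMap.comp_apply, ← hM, real_inner_self_eq_norm_sq]
  rw [Finset.sum_congr rfl fun i _ => h2 i,
    Finset.sum_eq_zero_iff_of_nonneg (fun i _ => by positivity)] at h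
  apply (EuclideanSpace.basisFun (Fin n) ℝ).toBasis.ext
  intro i
  simpa using h i (Finset.mem_univ _)

/-- The evaluation `M ↦ ⟪x, M x⟫` as a linear functional. -/
def trPairFlip (x : Euc n) : (Euc n →ₗ[ℝ] Euc n) →ₗ[ℝ] ℝ where
  toFun M := ⟪x, M x⟫
  map_add' M N := by simp [inner_add_right]
  map_smul' c M := by simp [real_inner_smul_right]

/-- Solving the linear system `⟪x, M x⟫ = g x` on half of a minimally perfect configuration. -/
lemma exists_solver (S : Set (Euc n)) (hfin : S.Finite) (hneg : ∀ x ∈ S, -x ∈ S)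
    (h0 : ∀ x ∈ S, x ≠ 0) (hcard : S.ncard = n * (n + 1)) (hp : IsPerfectCfg S) :
    ∃ c : ℝ, 0 ≤ c ∧ ∀ (g : Euc n → ℝ) (e : ℝ), 0 ≤ e → (∀ x ∈ S, g (-x) = g x) →
      (∀ x ∈ S, |g x| ≤ e) → ∃ M : Euc n →ₗ[ℝ] Euc n, M.IsSymmetric ∧
        (∀ x ∈ S, ⟪x, M x⟫ = g x) ∧ ∀ y, ‖M y‖ ≤ c * e * ‖y‖ := by
  classical
  let pos : Euc n → Prop := fun x => 0 < (toLex (x.ofLp) : Lex (Fin n → ℝ))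
  have pos_neg : ∀ x : Euc n, pos (-x) ↔ (toLex (x.ofLp) : Lex (Fin n → ℝ)) < 0 := by
    intro x
    have : (toLex ((-x).ofLp) : Lex (Fin n → ℝ)) = -(toLex (x.ofLp) : Lex (Fin n → ℝ)) := rfl
    simp only [pos, this]
    exact neg_pos
  have pos_or : ∀ x : Euc n, x ≠ 0 → pos x ∨ pos (-x) := by
    intro x hx
    rw [pos_neg]
    rcases lt_trichotomy (toLex (x.ofLp) : Lex (Fin n → ℝ)) 0 with h | h | h
    · exact Or.inr h
    · exfalso; apply hx
      have h3 : x.ofLp = 0 := h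
      ext i; simpa using congrFun h3 i
    · exact Or.inl h
  have pos_not : ∀ x : Euc n, pos x → ¬ pos (-x) := by
    intro x hx h
    rw [pos_neg] at h
    exact lt_asymm hx h
  let F := hfin.toFinset
  let R := F.filter pos
  let N := F.filter (fun x => ¬ pos x)
  have hNR : N.card = R.card := by
    symm
    refine Finset.card_bij (fun x _ => -x) ?_ ?_ ?_
    · intro x hx
      simp only [R, N, F, Finset.mem_filter, Set.Finite.mem_toFinset] at hx ⊢
      exact ⟨hneg x hx.1, pos_not x hx.2⟩
    · intro a _ b _ h
      exact neg_injective h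
    · intro x hx
      simp only [R, N, F, Finset.mem_filter, Set.Finite.mem_toFinset] at hx ⊢
      exact ⟨-x, ⟨hneg x hx.1, (pos_or x (h0 x hx.1)).resolve_left hx.2⟩, neg_neg x⟩
  have hF : R.card + N.card = F.card := Finset.card_filter_add_card_filter_not pos
  have hFc : F.card = n * (n + 1) := by
    rw [← hcard, Set.ncard_eq_toFinset_card S hfin]
  have hRc : R.card = (n + 1).choose 2 := by
    rw [Nat.choose_two_right]
    have : (n + 1) * (n + 1 - 1) = 2 * R.card := by
      rw [Nat.add_sub_cancel, mul_comm]; omega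
    omega
  let Φ : (Sym2 (Fin n) → ℝ) →ₗ[ℝ] (R → ℝ) :=
    LinearMap.pi fun x => trPairFlip (x : Euc n) ∘ₗ symEnd n
  have hΦ : ∀ f x, Φ f x = ⟪(x : Euc n), symEnd n f x⟫ := fun f x => rfl
  have hinj : Function.Injective Φ := by
    rw [injective_iff_map_eq_zero]
    intro f hf
    apply symEnd_inj
    apply sym_zero_of_trace _ (symEnd_symm f)
    have hR : ∀ x ∈ R, trPair (symEnd n f) (projMap x) = 0 := by
      intro x hx
      rw [trPair_proj]
      exact congrFun hf ⟨x, hx⟩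
    have hS : ∀ x ∈ S, trPair (symEnd n f) (projMap x) = 0 := by
      intro x hx
      rcases pos_or x (h0 x hx) with h | h
      · exact hR x (by simp [R, F, hx, h])
      · have := hR (-x) (by simp [R, F, hneg x hx, h])
        rw [trPair_proj] at this ⊢
        simpa using this
    have hle : Submodule.span ℝ (projMap '' S) ≤ LinearMap.ker (trPair (symEnd n f)) := by
      rw [Submodule.span_le]
      rintro _ ⟨x, hx, rfl⟩
      exact hS x hx
    exact hle (hp _ (symEnd_symm f))
  have hdim : Module.finrank ℝ (Sym2 (Fin n) → ℝ) = Module.finrank ℝ (R → ℝ) := by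
    rw [Module.finrank_fintype_fun_eq_card, Module.finrank_fintype_fun_eq_card, Sym2.card,
      Fintype.card_fin, Fintype.card_coe, hRc]
  let e := LinearEquiv.ofInjectiveOfFinrankEq Φ hinj hdim
  let Ψ : (R → ℝ) →ₗ[ℝ] (Euc n →L[ℝ] Euc n) :=
    (LinearMap.toContinuousLinearMap (𝕜 := ℝ) (E := Euc n) (F' := Euc n)).toLinearMap ∘ₗ
      symEnd n ∘ₗ e.symm.toLinearMap
  let Ψc := LinearMap.toContinuousLinearMap Ψ
  refine ⟨‖Ψc‖, ContinuousLinearMap.opNorm_nonneg Ψc, ?_⟩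
  intro g ε hε hg hgε
  let g' : R → ℝ := fun x => g x
  have hg' : ‖g'‖ ≤ ε := by
    rw [pi_norm_le_iff_of_nonneg hε]
    intro x
    have hx : (x : Euc n) ∈ S := by
      have := x.2
      simp only [R, F, Finset.mem_filter, Set.Finite.mem_toFinset] at this
      exact this.1
    exact hgε x hx
  refine ⟨symEnd n (e.symm g'), symEnd_symm _, ?_, ?_⟩
  · have hR : ∀ x (hx : x ∈ R), ⟪x, symEnd n (e.symm g') x⟫ = g x := by
      intro x hx
      have h1 : Φ (e.symm g') = g' := e.apply_symm_apply g'
      have := congrFun h1 ⟨x, hx⟩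
      rwa [hΦ] at this
    intro x hx
    rcases pos_or x (h0 x hx) with h | h
    · exact hR x (by simp [R, F, hx, h])
    · have := hR (-x) (by simp [R, F, hneg x hx, h])
      rw [hg x hx] at this
      simpa using this
  · intro y
    have h1 : ‖Ψc g' y‖ ≤ ‖Ψc g'‖ * ‖y‖ := (Ψc g').le_opNorm y
    have h2 : ‖Ψc g'‖ ≤ ‖Ψc‖ * ε := (Ψc.le_opNorm g').trans (by gcongr)
    exact h1.trans (by gcongr)

/-- Determinant bound for a positive symmetric map. -/
lemma det_le_exp (A : Euc n →ₗ[ℝ] Euc n) (hA : A.IsSymmetric) (hpos : ∀ y, 0 ≤ ⟪y, A y⟫) :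
    |LinearMap.det A| ≤ Real.exp (LinearMap.trace ℝ (Euc n) A - n) := by
  have hn : Module.finrank ℝ (Euc n) = n := finrank_euclideanSpace_fin
  have hdet := hA.det_eq_prod_eigenvalues hn
  have htr := hA.trace_eq_sum_eigenvalues (hn := hn)
  have hev : ∀ i, 0 ≤ hA.eigenvalues hn i := by
    intro i
    have h1 := hpos (hA.eigenvectorBasis hn i)
    rw [hA.apply_eigenvectorBasis hn i] at h1
    simpa [real_inner_smul_right] using h1
  simp only [RCLike.ofReal_real_eq_id, id] at hdet htr
  rw [hdet, abs_of_nonneg (Finset.prod_nonneg fun i _ => hev i), htr]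
  have : (∑ i, hA.eigenvalues hn i) - n = ∑ i, (hA.eigenvalues hn i - 1) := by
    simp [Finset.sum_sub_distrib]
  rw [this, Real.exp_sum]
  refine Finset.prod_le_prod (fun i _ => hev i) fun i _ => ?_
  have := Real.add_one_le_exp (hA.eigenvalues hn i - 1)
  linarith

lemma latticeSet_comp (A T : Euc n →ₗ[ℝ] Euc n) :
    latticeSet (A ∘ₗ T) = A '' latticeSet T := by
  ext v
  constructor
  · rintro ⟨z, rfl⟩
    exact ⟨_, ⟨z, rfl⟩, rfl⟩
  · rintro ⟨_, ⟨z, rfl⟩, rfl⟩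
    exact ⟨z, rfl⟩

lemma latDet_nonneg (Λ : Set (Euc n)) : 0 ≤ latDet Λ := by
  apply Real.sInf_nonneg
  rintro _ ⟨T, _, rfl⟩
  exact abs_nonneg _

lemma latDet_image_le (A : Euc n →ₗ[ℝ] Euc n) (hA : LinearMap.det A ≠ 0) (Λ : Set (Euc n))
    (hΛ : IsLattice Λ) : latDet (A '' Λ) / latDet Λ ≤ |LinearMap.det A| := by
  have hA' : 0 < |LinearMap.det A| := abs_pos.mpr hA
  apply div_le_of_le_mul₀ (latDet_nonneg _) hA'.le
  rw [← div_le_iff₀' hA']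
  obtain ⟨T, hT, hΛT⟩ := hΛ
  refine le_csInf ⟨_, T, hΛT, rfl⟩ ?_
  rintro _ ⟨T', hT', rfl⟩
  rw [div_le_iff₀' hA', ← abs_mul, ← LinearMap.det_comp]
  refine csInf_le ⟨0, ?_⟩ ⟨A ∘ₗ T', ?_, rfl⟩
  · rintro _ ⟨T, _, rfl⟩
    exact abs_nonneg _
  · rw [latticeSet_comp, hT']

lemma lattice_finite (Λ : Set (Euc n)) (hΛ : IsLattice Λ) (r : ℝ) :
    (Λ ∩ Metric.closedBall 0 r).Finite := by
  obtain ⟨T, hT, rfl⟩ := hΛ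
  let e := LinearEquiv.ofIsUnitDet (f := T) (v := (EuclideanSpace.basisFun (Fin n) ℝ).toBasis)
    (v' := (EuclideanSpace.basisFun (Fin n) ℝ).toBasis)
    (by rw [LinearMap.det_toMatrix]; exact isUnit_iff_ne_zero.mpr hT)
  let ec := LinearMap.toContinuousLinearMap e.symm.toLinearMap
  obtain ⟨N, hN⟩ := exists_nat_ge (‖ec‖ * r)
  refine Set.Finite.subset ((Set.finite_Icc (fun _ : Fin n => -(N : ℤ)) (fun _ => (N : ℤ))).image
    (fun z => T (∑ i, (z i : ℝ) • EuclideanSpace.single i 1))) ?_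
  rintro _ ⟨⟨z, rfl⟩, hz⟩
  refine ⟨z, ?_, rfl⟩
  set w : Euc n := ∑ i, (z i : ℝ) • EuclideanSpace.single i 1 with hw
  have hwi : ∀ i, w i = z i := by
    intro i
    simp [hw, Pi.single_apply]
  have h1 : ec (T w) = w := e.symm_apply_apply w
  have h2 : ‖w‖ ≤ N := by
    rw [← h1]
    refine (ec.le_opNorm _).trans (le_trans ?_ hN)
    gcongr
    simpa using hz
  have h3 : ∀ i, |z i| ≤ (N : ℤ) := by
    intro i
    have h4 := (PiLp.norm_apply_le w i).trans h2
    rw [hwi, Real.norm_eq_abs] at h4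
    exact_mod_cast h4
  exact ⟨fun i => (abs_le.mp (h3 i)).1, fun i => (abs_le.mp (h3 i)).2⟩

lemma lattice_neg (Λ : Set (Euc n)) (hΛ : IsLattice Λ) (x : Euc n) (hx : x ∈ Λ) : -x ∈ Λ := by
  obtain ⟨T, hT, rfl⟩ := hΛ
  obtain ⟨z, rfl⟩ := hx
  refine ⟨-z, ?_⟩
  rw [← map_neg]
  simp

lemma one_le_norm (Λ : Set (Euc n)) (hmin : minNorm Λ = 1) (y : Euc n) (hy : y ∈ Λ)
    (h0 : y ≠ 0) : 1 ≤ ‖y‖ := by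
  have h : minNorm Λ ≤ ‖y‖ ^ 2 := by
    refine csInf_le ⟨0, ?_⟩ ⟨y, hy, h0, rfl⟩
    rintro _ ⟨x, _, _, rfl⟩
    positivity
  rw [hmin] at h
  nlinarith [norm_nonneg y]

lemma exists_gap (Λ : Set (Euc n)) (hΛ : IsLattice Λ) (hmin : minNorm Λ = 1) :
    ∃ δ : ℝ, 0 < δ ∧ ∀ y ∈ Λ, y ≠ 0 → y ∉ minVecs Λ → 1 + δ ≤ ‖y‖ := by
  classical
  have hfin := lattice_finite Λ hΛ 2
  have hfin2 : {y | y ∈ Λ ∧ y ≠ 0 ∧ y ∉ minVecs Λ ∧ ‖y‖ ≤ 2}.Finite := by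
    refine hfin.subset ?_
    rintro y ⟨h1, h2, h3, h4⟩
    exact ⟨h1, by simpa using h4⟩
  have hgt : ∀ y ∈ Λ, y ≠ 0 → y ∉ minVecs Λ → 1 < ‖y‖ := by
    intro y h1 h2 h3
    refine lt_of_le_of_ne (one_le_norm Λ hmin y h1 h2) ?_
    intro h
    exact h3 ⟨h1, h2, by rw [hmin, ← h]; norm_num⟩
  rcases Set.eq_empty_or_nonempty {y | y ∈ Λ ∧ y ≠ 0 ∧ y ∉ minVecs Λ ∧ ‖y‖ ≤ 2} with he | hne
  · refine ⟨1, one_pos, fun y h1 h2 h3 => ?_⟩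
    by_contra h
    have : y ∈ {y | y ∈ Λ ∧ y ≠ 0 ∧ y ∉ minVecs Λ ∧ ‖y‖ ≤ 2} := ⟨h1, h2, h3, by linarith⟩
    rw [he] at this
    exact this
  · obtain ⟨y₀, ⟨a1, a2, a3, a4⟩, hy₀⟩ := Set.exists_min_image _ (fun y => ‖y‖) hfin2 hne
    refine ⟨‖y₀‖ - 1, by linarith [hgt y₀ a1 a2 a3], fun y h1 h2 h3 => ?_⟩
    by_cases h : ‖y‖ ≤ 2
    · have := hy₀ y ⟨h1, h2, h3, h⟩
      linarith
    · linarith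

lemma supp_bdd {K : Set (Euc n)} (hK : IsSymCB K) (x : Euc n) :
    BddAbove ((fun y => ⟪x, y⟫) '' K) :=
  (hK.compact.image (by fun_prop)).bddAbove

lemma suppFn_neg {K : Set (Euc n)} (hK : IsSymCB K) (x : Euc n) :
    suppFn K (-x) = suppFn K x := by
  unfold suppFn
  congr 1
  ext r
  constructor
  · rintro ⟨y, hy, rfl⟩
    refine ⟨-y, ?_, by simp⟩
    rw [← hK.symm]; simpa using hy
  · rintro ⟨y, hy, rfl⟩
    refine ⟨-y, ?_, by simp⟩
    rw [← hK.symm]; simpa using hy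

lemma lt_suppFn {K : Set (Euc n)} (hK : IsSymCB K) (x y : Euc n) (hx : ‖x‖ = 1)
    (hy : y ∈ interior K) : ⟪x, y⟫ < suppFn K x := by
  obtain ⟨r, hr, hball⟩ := Metric.isOpen_iff.mp isOpen_interior y hy
  have hm : y + (r / 2) • x ∈ K := by
    apply interior_subset
    apply hball
    rw [Metric.mem_ball, dist_eq_norm]
    simp [norm_smul, hx, abs_of_pos hr, hr]
  have h : ⟪x, y + (r / 2) • x⟫ ≤ suppFn K x := le_csSup (supp_bdd hK x) ⟨_, hm, rfl⟩
  rw [inner_add_right, real_inner_smul_right, real_inner_self_eq_norm_sq, hx] at h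
  linarith

lemma abs_suppFn_sub_one {K : Set (Euc n)} (hK : IsSymCB K) (x : Euc n) (hx : ‖x‖ = 1) (ε : ℝ)
    (hε1 : ε ≤ 1)
    (h1 : Metric.closedBall 0 (1 - ε) ⊆ K) (h2 : K ⊆ Metric.closedBall 0 (1 + ε)) :
    |suppFn K x - 1| ≤ ε := by
  have hm : (1 - ε) • x ∈ K := by
    apply h1
    simp [norm_smul, hx, abs_of_nonneg (sub_nonneg.mpr hε1)]
  have h : ⟪x, (1 - ε) • x⟫ ≤ suppFn K x := le_csSup (supp_bdd hK x) ⟨_, hm, rfl⟩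
  rw [real_inner_smul_right, real_inner_self_eq_norm_sq, hx] at h
  have h' : suppFn K x ≤ 1 + ε := by
    refine csSup_le ⟨_, _, hm, rfl⟩ ?_
    rintro _ ⟨y, hy, rfl⟩
    have := h2 hy
    rw [mem_closedBall_zero_iff] at this
    refine (real_inner_le_norm x y).trans ?_
    rw [hx, one_mul]; exact this
  rw [abs_le]
  constructor <;> linarith

end Helpers

/-- Theorem 3.9(i): if the critical lattice `Λ₀` of `Bⁿ`, unique up to
rotation, is minimally extreme with eutaxy coefficients `υ`, then every nearly spherical
body `K` admits an admissible lattice `Λ` with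
`d(Λ)/d(Λ₀) ≤ 1 + Σ υ_x (h_K(x) - 1) + C max |h_K(x) - 1|²`. -/
theorem admissible_lattice_support_bound (n : ℕ) (hn : 2 ≤ n) (Λ₀ : Set (Euc n))
    (hcrit : IsCriticalLattice Λ₀ (unitBall n))
    (huniq : ∀ Λ : Set (Euc n), IsCriticalLattice Λ (unitBall n) →
      ∃ U : Euc n ≃ₗᵢ[ℝ] Euc n, Λ = ⇑U '' Λ₀)
    (hmin : minNorm Λ₀ = 1)
    (hcard : (minVecs Λ₀).ncard = n * (n + 1))
    (hperfect : IsPerfectCfg (minVecs Λ₀))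
    (υ : Euc n → ℝ)
    (hpos : ∀ x ∈ minVecs Λ₀, 0 < υ x) (hzero : ∀ x ∉ minVecs Λ₀, υ x = 0)
    (hυsym : ∀ x, υ x = υ (-x))
    (heutaxy : ∑ᶠ x, υ x • projMap x = (LinearMap.id : Euc n →ₗ[ℝ] Euc n)) :
    ∃ ε > (0 : ℝ), ∃ C > (0 : ℝ), ∀ K : Set (Euc n), IsSymCB K →
      Metric.closedBall 0 (1 - ε) ⊆ K → K ⊆ Metric.closedBall 0 (1 + ε) →
      ∃ Λ : Set (Euc n), IsLattice Λ ∧ IsAdmissible Λ K ∧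
        latDet Λ / latDet Λ₀ ≤
          1 + (∑ᶠ x ∈ minVecs Λ₀, υ x * (suppFn K x - 1)) +
            C * sSup {r | ∃ x ∈ minVecs Λ₀, r = |suppFn K x - 1| ^ 2} := by
  classical
  have hlat := hcrit.1
  set S := minVecs Λ₀ with hS
  have hfin : S.Finite := Set.finite_of_ncard_pos (by rw [hcard]; positivity)
  have hunit : ∀ x ∈ S, ‖x‖ = 1 := by
    intro x hx
    have h := hx.2.2
    rw [hmin] at h
    nlinarith [norm_nonneg x]
  have hnegS : ∀ x ∈ S, -x ∈ S := by
    intro x hx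
    exact ⟨lattice_neg Λ₀ hlat x hx.1, neg_ne_zero.mpr hx.2.1, by rw [norm_neg]; exact hx.2.2⟩
  obtain ⟨c, hc, hsolve⟩ := exists_solver S hfin hnegS (fun x hx => hx.2.1) hcard hperfect
  obtain ⟨δ, hδ, hgap⟩ := exists_gap Λ₀ hlat hmin
  let F := hfin.toFinset
  let V := ∑ x ∈ F, υ x
  have hV : 0 ≤ V := Finset.sum_nonneg fun x hx => (hpos x (by simpa [F] using hx)).le
  have heut : ∑ x ∈ F, υ x • projMap x = (LinearMap.id : Euc n →ₗ[ℝ] Euc n) := by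
    rw [← heutaxy]
    symm
    apply finsum_eq_sum_of_support_subset
    intro x hx
    by_contra hxF
    apply hx
    have : x ∉ S := by simpa [F] using hxF
    simp [hzero x this]
  obtain ⟨ε, hε, hεδ, hεc, hεV, hε1⟩ : ∃ ε : ℝ, 0 < ε ∧ ε * (1 + c * (1 + δ)) ≤ δ ∧
      c * ε ≤ 1 / 2 ∧ V * ε ≤ 1 ∧ ε ≤ 1 := by
    have p1 : 0 < 1 + c * (1 + δ) := by positivity
    have p2 : 0 < 2 * c + 1 := by positivity
    have p3 : 0 < V + 1 := by positivity
    refine ⟨min (min (δ / (1 + c * (1 + δ))) (1 / (2 * c + 1))) (1 / (V + 1)), ?_, ?_, ?_, ?_, ?_⟩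
    · positivity
    · rw [← le_div_iff₀ p1]
      exact (min_le_left _ _).trans (min_le_left _ _)
    · have h : min (min (δ / (1 + c * (1 + δ))) (1 / (2 * c + 1))) (1 / (V + 1))
          ≤ 1 / (2 * c + 1) := (min_le_left _ _).trans (min_le_right _ _)
      refine (mul_le_mul_of_nonneg_left h hc).trans ?_
      rw [mul_one_div, div_le_div_iff₀ p2 two_pos]
      linarith
    · refine (mul_le_mul_of_nonneg_left (min_le_right _ _) hV).trans ?_
      rw [mul_one_div, div_le_one p3]
      linarith
    · refine (min_le_right _ _).trans ?_
      rw [div_le_one p3]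
      linarith
  refine ⟨ε, hε, V ^ 2 + 1, by positivity, ?_⟩
  intro K hK hK1 hK2
  have habs : ∀ x ∈ S, |suppFn K x - 1| ≤ ε := fun x hx =>
    abs_suppFn_sub_one hK x (hunit x hx) ε hε1 hK1 hK2
  obtain ⟨M, hMs, hMx, hMn⟩ := hsolve (fun x => suppFn K x - 1) ε hε.le
    (fun x _ => by simp only [suppFn_neg hK]) habs
  let A : Euc n →ₗ[ℝ] Euc n := LinearMap.id + M
  have hAy : ∀ y, A y = y + M y := fun y => rfl
  have hAn : ∀ y, (1 - c * ε) * ‖y‖ ≤ ‖A y‖ := by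
    intro y
    have h1 := norm_sub_le (y + M y) (M y)
    rw [add_sub_cancel_right] at h1
    have h2 := hMn y
    rw [hAy]
    linarith
  have hAs : A.IsSymmetric := LinearMap.IsSymmetric.id.add hMs
  have hApos : ∀ y, 0 ≤ ⟪y, A y⟫ := by
    intro y
    rw [hAy, inner_add_right, real_inner_self_eq_norm_sq]
    have h1 := neg_le_of_abs_le (abs_real_inner_le_norm y (M y))
    have h2 := mul_le_mul_of_nonneg_left (hMn y) (norm_nonneg y)
    have h3 := mul_le_mul_of_nonneg_right hεc (sq_nonneg ‖y‖)
    nlinarith [sq_nonneg ‖y‖]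
  have hAker : LinearMap.ker A = ⊥ := by
    rw [LinearMap.ker_eq_bot']
    intro y hy
    have h1 := hAn y
    rw [hy, norm_zero] at h1
    have : ‖y‖ ≤ 0 := by nlinarith [norm_nonneg y]
    exact norm_le_zero_iff.mp this
  have hAdet : LinearMap.det A ≠ 0 := by
    intro h
    exact (LinearMap.bot_lt_ker_of_det_eq_zero h).ne' hAker
  have htrM : LinearMap.trace ℝ (Euc n) M = ∑ x ∈ F, υ x * (suppFn K x - 1) := by
    have h1 : trPair M LinearMap.id = LinearMap.trace ℝ (Euc n) M := by
      rw [trPair_apply, LinearMap.comp_id]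
    rw [← h1, ← heut, map_sum]
    refine Finset.sum_congr rfl fun x hx => ?_
    rw [map_smul, trPair_proj, hMx x (by simpa [F] using hx), smul_eq_mul]
  have htrA : LinearMap.trace ℝ (Euc n) A - n = ∑ x ∈ F, υ x * (suppFn K x - 1) := by
    rw [← htrM]
    simp [A]
  refine ⟨A '' Λ₀, ?_, ?_, ?_⟩
  · obtain ⟨T, hT, hTΛ⟩ := hlat
    refine ⟨A ∘ₗ T, ?_, ?_⟩
    · rw [LinearMap.det_comp]
      exact mul_ne_zero hAdet hT
    · rw [latticeSet_comp, hTΛ]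
  · rintro _ ⟨⟨y, hy, rfl⟩, hyK⟩
    by_contra hne
    have hy0 : y ≠ 0 := by
      rintro rfl
      apply hne
      simp
    by_cases hyS : y ∈ S
    · have h1 := lt_suppFn hK y (A y) (hunit y hyS) hyK
      rw [hAy, inner_add_right, hMx y hyS, real_inner_self_eq_norm_sq, hunit y hyS] at h1
      linarith
    · have h1 := hgap y hy hy0 hyS
      have h2 := interior_mono hK2 hyK
      rw [interior_closedBall _ (by positivity), mem_ball_zero_iff] at h2
      have h3 := hAn y
      have h4 : (1 - c * ε) * (1 + δ) ≤ (1 - c * ε) * ‖y‖ :=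
        mul_le_mul_of_nonneg_left h1 (by linarith)
      nlinarith
  · refine (latDet_image_le A hAdet Λ₀ hlat).trans ?_
    refine (det_le_exp A hAs hApos).trans ?_
    rw [htrA]
    have hsum : ∑ᶠ x ∈ S, υ x * (suppFn K x - 1) = ∑ x ∈ F, υ x * (suppFn K x - 1) := by
      rw [finsum_mem_eq_finite_toFinset_sum _ hfin]
    rw [hsum]
    set t := ∑ x ∈ F, υ x * (suppFn K x - 1) with ht
    set m := sSup {r | ∃ x ∈ S, r = |suppFn K x - 1| ^ 2} with hm
    have hbdd : BddAbove {r | ∃ x ∈ S, r = |suppFn K x - 1| ^ 2} := by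
      refine ⟨ε ^ 2, ?_⟩
      rintro _ ⟨x, hx, rfl⟩
      exact pow_le_pow_left₀ (abs_nonneg _) (habs x hx) 2
    have hm0 : 0 ≤ m := by
      apply Real.sSup_nonneg
      rintro _ ⟨x, hx, rfl⟩
      positivity
    have hle : ∀ x ∈ S, |suppFn K x - 1| ≤ Real.sqrt m := by
      intro x hx
      exact Real.le_sqrt_of_sq_le (le_csSup hbdd ⟨x, hx, rfl⟩)
    have hbound : ∀ e : ℝ, (∀ x ∈ S, |suppFn K x - 1| ≤ e) → |t| ≤ V * e := by
      intro e he
      rw [ht, Finset.sum_mul]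
      refine (Finset.abs_sum_le_sum_abs _ _).trans (Finset.sum_le_sum fun x hx => ?_)
      have hx' : x ∈ S := by simpa [F] using hx
      rw [abs_mul, abs_of_pos (hpos x hx')]
      exact mul_le_mul_of_nonneg_left (he x hx') (hpos x hx').le
    have ht1 : |t| ≤ 1 := (hbound ε habs).trans hεV
    have ht2 : t ^ 2 ≤ V ^ 2 * m := by
      have h := pow_le_pow_left₀ (abs_nonneg t) (hbound _ hle) 2
      rwa [sq_abs, mul_pow, Real.sq_sqrt hm0] at h
    have h3 := le_of_abs_le (Real.abs_exp_sub_one_sub_id_le ht1)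
    nlinarith

end
end

section
/- Let n ≥ 2 and suppose Λ₀ is a critical lattice of the unit ball B^n which is unique up to rotation, with m(Λ₀) = 1, and suppose the configuration S(Λ₀) of minimal vectors is minimally extreme with eutaxy coefficients υ_x. Then for every ε' > 0 there exists ε > 0 such that for every origin-symmetric convex body K with (1−ε)B^n ⊆ K ⊆ (1+ε)B^n there is a lattice Λ' admissible for K satisfying d(Λ')/d(Λ₀) ≤ 1 + Σ_{x∈S(Λ₀)} υ_x ρ_x + ε' Σ_{x∈S(Λ₀)} |ρ_x|, where ρ_x = r_K(x) − 1 and r_K(x) = max{λ ≥ 0 : λx ∈ K} is the radial function of K. -/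
open scoped RealInnerProductSpace
open Metric MeasureTheory

noncomputable section

/-! ### Helper lemmas -/

lemma aux_det {n : ℕ} (A : Euc n →ₗ[ℝ] Euc n) (hA : A.IsSymmetric) (a : ℝ) (ha : a < 1)
    (hb : ∀ y, ‖A y‖ ≤ a * ‖y‖) :
    0 < LinearMap.det (LinearMap.id + A) ∧
      LinearMap.det (LinearMap.id + A) ≤ Real.exp (LinearMap.trace ℝ _ A) := by
  have hT : (LinearMap.id + A : Euc n →ₗ[ℝ] Euc n).IsSymmetric :=
    LinearMap.IsSymmetric.add LinearMap.IsSymmetric.id hA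
  have hn : Module.finrank ℝ (Euc n) = n := by simp
  have hpos : ∀ i, 0 < hT.eigenvalues hn i := by
    intro i
    have h1 := hT.apply_eigenvectorBasis hn i
    have h2 : ‖hT.eigenvectorBasis hn i‖ = 1 := (hT.eigenvectorBasis hn).orthonormal.1 i
    set v := hT.eigenvectorBasis hn i
    set μ := hT.eigenvalues hn i
    have h3 : A v = (μ - 1) • v := by
      have : v + A v = μ • v := by simpa using h1
      rw [sub_smul, one_smul, ← this]; abel
    have h4 := hb v
    rw [h3, norm_smul, h2, mul_one, mul_one, Real.norm_eq_abs] at h4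
    have := (abs_le.1 h4).1
    linarith
  have hdet := hT.det_eq_prod_eigenvalues hn
  have htr := LinearMap.IsSymmetric.trace_eq_sum_eigenvalues hn hT
  simp only [RCLike.ofReal_real_eq_id, id_eq] at hdet htr
  have htr2 : LinearMap.trace ℝ _ A = ∑ i, (hT.eigenvalues hn i - 1) := by
    rw [Finset.sum_sub_distrib, ← htr, map_add, LinearMap.trace_id]
    simp
  rw [htr2, hdet, Real.exp_sum]
  refine ⟨Finset.prod_pos fun i _ => hpos i, Finset.prod_le_prod (fun i _ => (hpos i).le) ?_⟩
  intro i _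
  have := Real.add_one_le_exp (hT.eigenvalues hn i - 1)
  linarith

lemma aux_trace_proj {n : ℕ} (A : Euc n →ₗ[ℝ] Euc n) (x : Euc n) :
    LinearMap.trace ℝ _ (A ∘ₗ projMap x) = ⟪A x, x⟫ := by
  rw [LinearMap.trace_eq_sum_inner _ (EuclideanSpace.basisFun (Fin n) ℝ)]
  have := (EuclideanSpace.basisFun (Fin n) ℝ).sum_inner_mul_inner x (A x)
  rw [real_inner_comm, ← this]
  refine Finset.sum_congr rfl fun i _ => ?_
  simp only [LinearMap.comp_apply, projMap, LinearMap.coe_mk, AddHom.coe_mk, map_smul,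
    real_inner_smul_right]
  rw [real_inner_comm x]

lemma aux_trace_zero {n : ℕ} (A : Euc n →ₗ[ℝ] Euc n) (hA : A.IsSymmetric)
    (h : LinearMap.trace ℝ _ (A ∘ₗ A) = 0) : A = 0 := by
  rw [LinearMap.trace_eq_sum_inner _ (EuclideanSpace.basisFun (Fin n) ℝ)] at h
  rw [Finset.sum_eq_zero_iff_of_nonneg] at h
  · refine (EuclideanSpace.basisFun (Fin n) ℝ).toBasis.ext fun i => ?_
    have := h i (Finset.mem_univ i)
    rw [LinearMap.comp_apply, ← hA, inner_self_eq_zero] at this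
    simpa using this
  · intro i _
    rw [LinearMap.comp_apply, ← hA]
    exact real_inner_self_nonneg

lemma aux_proj_inj {n : ℕ} (x y : Euc n) (hx : ‖x‖ = 1) (hy : ‖y‖ = 1)
    (h : projMap x = projMap y) : x = y ∨ x = -y := by
  have h1 : x = (⟪x, y⟫) • y := by
    have := LinearMap.congr_fun h x
    simp only [projMap, LinearMap.coe_mk, AddHom.coe_mk] at this
    rw [real_inner_self_eq_norm_sq, hx] at this
    simpa using this
  have h2 : |⟪x, y⟫| = 1 := by
    have := congrArg norm h1
    rw [norm_smul, hx, hy, mul_one] at this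
    exact this.symm
  rcases (abs_eq one_pos.le).1 h2 with h3 | h3
  · left; rw [h3] at h1; simpa using h1
  · right; rw [h3] at h1; simpa using h1

/-- symmetric maps parametrised by functions on unordered pairs -/
def symParam (n : ℕ) : (Sym2 (Fin n) → ℝ) →ₗ[ℝ] (Euc n →ₗ[ℝ] Euc n) :=
  (Matrix.toEuclideanLin (𝕜 := ℝ) (m := Fin n) (n := Fin n)).toLinearMap ∘ₗ
    { toFun := fun f => Matrix.of fun i j => f s(i, j)
      map_add' := fun f g => by ext; simp
      map_smul' := fun c f => by ext; simp }

lemma symParam_symm {n : ℕ} (f : Sym2 (Fin n) → ℝ) : (symParam n f).IsSymmetric := by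
  refine Matrix.isSymmetric_toEuclideanLin_iff.2 ?_
  ext i j
  simp [Sym2.eq_swap]

lemma symParam_inj (n : ℕ) : Function.Injective (symParam n) := by
  intro f g h
  have h1 := (Matrix.toEuclideanLin (𝕜 := ℝ) (m := Fin n) (n := Fin n)).injective h
  funext p
  induction p with
  | _ i j => exact congrFun (congrFun h1 i) j

lemma aux_interp {n : ℕ} (hn : 2 ≤ n) (S : Set (Euc n)) (hcard : S.ncard = n * (n + 1))
    (hunit : ∀ x ∈ S, ‖x‖ = 1) (hneg : ∀ x ∈ S, -x ∈ S) (hperf : IsPerfectCfg S) :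
    ∃ C : ℝ, 0 ≤ C ∧ ∀ (c : Euc n → ℝ) (M : ℝ), 0 ≤ M → (∀ x, c (-x) = c x) →
      (∀ x ∈ S, |c x| ≤ M) → ∃ A : Euc n →ₗ[ℝ] Euc n, A.IsSymmetric ∧
        (∀ x ∈ S, ⟪A x, x⟫ = c x) ∧ ∀ y, ‖A y‖ ≤ C * M * ‖y‖ := by
  classical
  have hfin : S.Finite := Set.finite_of_ncard_pos (by rw [hcard]; positivity)
  set Q : Finset (Euc n →ₗ[ℝ] Euc n) := hfin.toFinset.image projMap with hQ
  have hQcard : 2 * Q.card ≤ n * (n + 1) := by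
    rw [← hcard, Set.ncard_eq_toFinset_card S hfin]
    refine Finset.mul_card_image_le_card _ 2 ?_
    intro P hP
    obtain ⟨x, hx, rfl⟩ := Finset.mem_image.1 hP
    have hxS : x ∈ S := by simpa using hx
    have hne : x ≠ -x := by
      intro h
      have h2 : (2 : ℝ) • x = 0 := by
        rw [two_smul]
        nth_rewrite 2 [h]
        exact add_neg_cancel x
      have h0 : x = 0 := (smul_eq_zero.1 h2).resolve_left two_ne_zero
      have := hunit x hxS
      simp [h0] at this
    rw [← Finset.card_pair hne]
    refine Finset.card_le_card ?_
    intro y hy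
    rw [Finset.mem_insert, Finset.mem_singleton] at hy
    rcases hy with rfl | rfl
    · simpa using hxS
    · simp only [Finset.mem_filter, Set.Finite.mem_toFinset]
      refine ⟨hneg x hxS, ?_⟩
      ext1 z
      simp [projMap]
  let Φ : (Sym2 (Fin n) → ℝ) →ₗ[ℝ] (Q → ℝ) :=
    LinearMap.pi fun P => (LinearMap.trace ℝ (Euc n)) ∘ₗ
      ((LinearMap.lcomp ℝ (Euc n) P.1) ∘ₗ symParam n)
  have hΦ : ∀ f P, Φ f P = LinearMap.trace ℝ (Euc n) (symParam n f ∘ₗ P.1) := fun f P => rfl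
  have hinj : Function.Injective Φ := by
    rw [← LinearMap.ker_eq_bot, LinearMap.ker_eq_bot']
    intro f hf
    apply symParam_inj
    rw [map_zero]
    apply aux_trace_zero _ (symParam_symm f)
    have key : ∀ B ∈ Submodule.span ℝ (projMap '' S),
        LinearMap.trace ℝ (Euc n) (symParam n f ∘ₗ B) = 0 := by
      intro B hB
      induction hB using Submodule.span_induction with
      | mem B hB =>
        have hBQ : B ∈ Q := by
          obtain ⟨x, hx, rfl⟩ := hB
          exact Finset.mem_image_of_mem _ (by simpa using hx)
        have := congrFun hf ⟨B, hBQ⟩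
        rw [hΦ] at this
        simpa using this
      | zero => simp
      | add B C _ _ hB hC => rw [LinearMap.comp_add, map_add, hB, hC, add_zero]
      | smul a B _ hB => rw [LinearMap.comp_smul, map_smul, hB, smul_zero]
    exact key _ (hperf _ (symParam_symm f))
  have hsurj : Function.Surjective Φ := by
    refine (LinearMap.injective_iff_surjective_of_finrank_eq_finrank ?_).1 hinj
    refine le_antisymm (LinearMap.finrank_le_finrank_of_injective hinj) ?_
    rw [Module.finrank_fintype_fun_eq_card, Module.finrank_fintype_fun_eq_card, Sym2.card,
      Fintype.card_coe, Fintype.card_fin, Nat.choose_two_right, Nat.le_div_iff_mul_le two_pos]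
    simp only [Nat.add_sub_cancel]
    linarith
  obtain ⟨R, hR⟩ := LinearMap.exists_rightInverse_of_surjective Φ (LinearMap.range_eq_top.2 hsurj)
  let R' : (Q → ℝ) →L[ℝ] (Euc n →L[ℝ] Euc n) := LinearMap.toContinuousLinearMap
    ((LinearMap.toContinuousLinearMap (𝕜 := ℝ) (E := Euc n) (F' := Euc n)).toLinearMap ∘ₗ
      (symParam n ∘ₗ R))
  refine ⟨‖R'‖, ContinuousLinearMap.opNorm_nonneg R', ?_⟩
  intro c M hM hc hcM
  have hex : ∀ P : Q, ∃ x ∈ S, projMap x = P.1 := by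
    intro P
    obtain ⟨x, hx, h⟩ := Finset.mem_image.1 P.2
    exact ⟨x, by simpa using hx, h⟩
  choose g hgS hgP using hex
  let d : Q → ℝ := fun P => c (g P)
  refine ⟨symParam n (R d), symParam_symm _, ?_, ?_⟩
  · intro x hx
    have hxQ : projMap x ∈ Q := Finset.mem_image_of_mem _ (by simpa using hx)
    have h1 : Φ (R d) ⟨projMap x, hxQ⟩ = d ⟨projMap x, hxQ⟩ := by
      have := LinearMap.congr_fun hR d
      exact congrFun this _
    rw [hΦ, aux_trace_proj] at h1
    rw [h1]
    rcases aux_proj_inj _ x (hunit _ (hgS ⟨projMap x, hxQ⟩)) (hunit x hx) (hgP ⟨projMap x, hxQ⟩)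
      with h | h
    · simp only [d]; rw [h]
    · simp only [d]; rw [h, hc]
  · intro y
    have h1 : symParam n (R d) y = R' d y := rfl
    rw [h1]
    refine (ContinuousLinearMap.le_opNorm _ _).trans ?_
    gcongr
    refine (ContinuousLinearMap.le_opNorm _ _).trans ?_
    gcongr
    rw [pi_norm_le_iff_of_nonneg hM]
    intro P
    exact hcM _ (hgS P)

lemma aux_trace_eutaxy {n : ℕ} (A : Euc n →ₗ[ℝ] Euc n) (s : Finset (Euc n)) (υ : Euc n → ℝ)
    (h : ∑ x ∈ s, υ x • projMap x = (LinearMap.id : Euc n →ₗ[ℝ] Euc n)) :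
    LinearMap.trace ℝ _ A = ∑ x ∈ s, υ x * ⟪A x, x⟫ := by
  have h1 : A = ∑ x ∈ s, υ x • (A ∘ₗ projMap x) := by
    conv_lhs => rw [← LinearMap.comp_id A, ← h]
    ext1 y
    simp [LinearMap.sum_apply, map_sum]
  conv_lhs => rw [h1]
  rw [map_sum]
  refine Finset.sum_congr rfl fun x _ => ?_
  rw [map_smul, aux_trace_proj, smul_eq_mul]

lemma aux_body {n : ℕ} (K : Set (Euc n)) (hK : IsSymCB K) (ε : ℝ) (hε : 0 < ε) (hε1 : ε < 1)
    (h1 : Metric.closedBall 0 (1 - ε) ⊆ K) (h2 : K ⊆ Metric.closedBall 0 (1 + ε))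
    (x : Euc n) (hx : ‖x‖ = 1) :
    |radFn K x - 1| ≤ ε ∧ ∃ u : Euc n, ‖u - x‖ ≤ 2 * Real.sqrt ε ∧
      ∀ y ∈ interior K, ⟪y, u⟫ < radFn K x * ⟪x, u⟫ := by
  have hub : ∀ t ∈ {t : ℝ | 0 ≤ t ∧ t • x ∈ K}, t ≤ 1 + ε := by
    rintro t ⟨ht, htK⟩
    have := h2 htK
    rw [mem_closedBall_zero_iff, norm_smul, hx, mul_one, Real.norm_eq_abs] at this
    exact (le_abs_self t).trans this
  have hbdd : BddAbove {t : ℝ | 0 ≤ t ∧ t • x ∈ K} := ⟨1 + ε, hub⟩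
  have hmem : (1 - ε) ∈ {t : ℝ | 0 ≤ t ∧ t • x ∈ K} := by
    refine ⟨by linarith, h1 ?_⟩
    rw [mem_closedBall_zero_iff, norm_smul, hx, mul_one, Real.norm_eq_abs, abs_of_pos (by linarith)]
  have hr1 : 1 - ε ≤ radFn K x := le_csSup hbdd hmem
  have hr2 : radFn K x ≤ 1 + ε := csSup_le ⟨_, hmem⟩ hub
  refine ⟨abs_le.2 ⟨by linarith, by linarith⟩, ?_⟩
  set r := radFn K x with hr
  have hnot : r • x ∉ interior K := by
    intro hin
    have hcont : Filter.Tendsto (fun t : ℝ => t • x) (nhdsWithin r (Set.Ioi r)) (nhds (r • x)) :=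
      ((continuous_id.smul continuous_const).tendsto r).mono_left nhdsWithin_le_nhds
    have hev := hcont.eventually (isOpen_interior.mem_nhds hin)
    obtain ⟨t, htK, htr⟩ := (hev.and self_mem_nhdsWithin).exists
    have htr' : r < t := htr
    have : t ≤ r := le_csSup hbdd ⟨by linarith, interior_subset htK⟩
    linarith
  obtain ⟨f, hf⟩ := geometric_hahn_banach_open_point hK.convex.interior isOpen_interior hnot
  set v := (InnerProductSpace.toDual ℝ (Euc n)).symm f with hv
  have hfv : ∀ y, f y = ⟪y, v⟫ := by
    intro y
    rw [real_inner_comm, hv, InnerProductSpace.toDual_symm_apply]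
  have hball : Metric.ball (0 : Euc n) (1 - ε) ⊆ interior K :=
    interior_maximal (Metric.ball_subset_closedBall.trans h1) Metric.isOpen_ball
  have hv0 : v ≠ 0 := by
    intro h0
    have := hf 0 (hball (by simpa using hε1))
    rw [hfv, hfv, h0] at this
    simp at this
  have hvn : 0 < ‖v‖ := norm_pos_iff.2 hv0
  set u := ‖v‖⁻¹ • v with hu
  have hun : ‖u‖ = 1 := by
    rw [hu, norm_smul, norm_inv, norm_norm, inv_mul_cancel₀ hvn.ne']
  have hsep : ∀ y ∈ interior K, ⟪y, u⟫ < r * ⟪x, u⟫ := by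
    intro y hy
    have := hf y hy
    rw [hfv, hfv, real_inner_smul_left] at this
    rw [hu, real_inner_smul_right, real_inner_smul_right]
    have h3 := mul_lt_mul_of_pos_left this (inv_pos.2 hvn)
    linarith
  refine ⟨u, ?_, hsep⟩
  have h3 : 1 - ε ≤ r * ⟪x, u⟫ := by
    refine le_of_forall_lt_imp_le_of_dense ?_
    intro t ht
    rcases le_or_gt t 0 with h0 | h0
    · have := hsep 0 (hball (by simpa using hε1))
      rw [inner_zero_left] at this
      linarith
    · have := hsep (t • u) (hball (by
        rw [mem_ball_zero_iff, norm_smul, hun, mul_one, Real.norm_eq_abs, abs_of_pos h0]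
        exact ht))
      rw [real_inner_smul_left, real_inner_self_eq_norm_sq, hun] at this
      linarith
  have h4 : 0 < ⟪x, u⟫ := by
    by_contra h
    push Not at h
    nlinarith
  have h5 : ‖u - x‖ ^ 2 ≤ 4 * ε := by
    rw [norm_sub_sq_real, hun, hx, real_inner_comm]
    have h6 : 1 - ε ≤ (1 + ε) * ⟪x, u⟫ := h3.trans (by gcongr)
    have h7 : ⟪x, u⟫ ≤ 1 := by
      have := real_inner_le_norm x u
      rw [hx, hun] at this; linarith
    nlinarith
  refine abs_le_of_sq_le_sq' ?_ (by positivity) |>.2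
  rw [mul_pow, Real.sq_sqrt hε.le]
  linarith

lemma aux_gap {n : ℕ} (Λ : Set (Euc n)) (hΛ : IsLattice Λ) :
    ∃ δ > (0 : ℝ), ∀ y ∈ Λ, 1 < ‖y‖ → 1 + δ ≤ ‖y‖ := by
  obtain ⟨T, hT, rfl⟩ := hΛ
  have hfin : {y ∈ latticeSet T | ‖y‖ ≤ 2}.Finite := by
    let e := LinearEquiv.ofIsUnitDet (f := T)
      (v := (EuclideanSpace.basisFun (Fin n) ℝ).toBasis)
      (v' := (EuclideanSpace.basisFun (Fin n) ℝ).toBasis)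
      (by rw [LinearMap.det_toMatrix]; exact isUnit_iff_ne_zero.2 hT)
    let L : Euc n →L[ℝ] Euc n := LinearMap.toContinuousLinearMap e.symm.toLinearMap
    obtain ⟨N, hN⟩ := exists_nat_ge (‖L‖ * 2)
    have hZ : (Set.univ.pi fun _ : Fin n => Set.Icc (-(N : ℤ)) N).Finite :=
      Set.Finite.pi fun _ => Set.finite_Icc _ _
    refine (hZ.image fun z : Fin n → ℤ =>
      T (∑ i, (z i : ℝ) • EuclideanSpace.single i (1 : ℝ))).subset ?_
    rintro y ⟨⟨z, rfl⟩, hy⟩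
    refine ⟨z, ?_, rfl⟩
    intro i _
    set w : Euc n := ∑ i, (z i : ℝ) • EuclideanSpace.single i (1 : ℝ) with hw
    have hwi : w i = z i := by
      simp [hw, Pi.single_apply]
    have h1 : L (T w) = w := e.symm_apply_apply w
    have h2 : ‖w‖ ≤ N := by
      rw [← h1]
      exact ((L.le_opNorm _).trans (by gcongr)).trans hN
    have h3 : |(z i : ℝ)| ≤ N := by
      rw [← hwi]
      exact (PiLp.norm_apply_le w i).trans h2
    have h4 := abs_le.1 h3
    constructor
    · exact_mod_cast h4.1
    · exact_mod_cast h4.2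
  have hfin2 := (hfin.subset (fun y (hy : y ∈ {y ∈ latticeSet T | ‖y‖ ≤ 2 ∧ 1 < ‖y‖}) =>
    (⟨hy.1, hy.2.1⟩ : y ∈ {y ∈ latticeSet T | ‖y‖ ≤ 2})))
  rcases Set.eq_empty_or_nonempty {y ∈ latticeSet T | ‖y‖ ≤ 2 ∧ 1 < ‖y‖} with h | h
  · refine ⟨1, one_pos, fun y hy hy1 => ?_⟩
    by_contra hc
    have : y ∈ {y ∈ latticeSet T | ‖y‖ ≤ 2 ∧ 1 < ‖y‖} := ⟨hy, by linarith, hy1⟩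
    rw [h] at this
    exact this
  · obtain ⟨y₀, hy₀, hmin⟩ := Set.exists_min_image _ (fun y => ‖y‖) hfin2 h
    refine ⟨‖y₀‖ - 1, by linarith [hy₀.2.2], fun y hy hy1 => ?_⟩
    rcases le_or_gt ‖y‖ 2 with h2 | h2
    · have := hmin y ⟨hy, h2, hy1⟩
      linarith
    · linarith [hy₀.2.1]

lemma aux_latticeSet_comp {n : ℕ} (T B : Euc n →ₗ[ℝ] Euc n) :
    B '' latticeSet T = latticeSet (B ∘ₗ T) := by
  ext v
  constructor
  · rintro ⟨_, ⟨z, rfl⟩, rfl⟩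
    exact ⟨z, rfl⟩
  · rintro ⟨z, rfl⟩
    exact ⟨_, ⟨z, rfl⟩, rfl⟩

lemma aux_isLattice_image {n : ℕ} (Λ : Set (Euc n)) (hΛ : IsLattice Λ) (B : Euc n →ₗ[ℝ] Euc n)
    (hB : 0 < LinearMap.det B) :
    IsLattice (B '' Λ) ∧ latDet (B '' Λ) ≤ LinearMap.det B * latDet Λ ∧ 0 ≤ latDet Λ := by
  have hnn : 0 ≤ latDet Λ := by
    refine Real.sInf_nonneg ?_
    rintro d ⟨T, _, rfl⟩
    exact abs_nonneg _
  obtain ⟨T₀, hT₀, h₀⟩ := hΛ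
  refine ⟨⟨B ∘ₗ T₀, ?_, by rw [h₀, aux_latticeSet_comp]⟩, ?_, hnn⟩
  · rw [LinearMap.det_comp]; exact mul_ne_zero hB.ne' hT₀
  rw [mul_comm, ← div_le_iff₀ hB]
  refine le_csInf ⟨_, T₀, h₀, rfl⟩ ?_
  rintro d ⟨T, hT, rfl⟩
  rw [div_le_iff₀ hB]
  refine csInf_le ⟨0, ?_⟩ ⟨B ∘ₗ T, by rw [hT, aux_latticeSet_comp], ?_⟩
  · rintro d ⟨T, _, rfl⟩
    exact abs_nonneg _
  · rw [LinearMap.det_comp, abs_mul, abs_of_pos hB, mul_comm]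

lemma aux_lattice_neg {n : ℕ} (Λ : Set (Euc n)) (hΛ : IsLattice Λ) : ∀ x ∈ Λ, -x ∈ Λ := by
  obtain ⟨T, _, rfl⟩ := hΛ
  rintro x ⟨z, rfl⟩
  refine ⟨-z, ?_⟩
  rw [← map_neg, ← Finset.sum_neg_distrib]
  congr 1
  refine Finset.sum_congr rfl fun i _ => ?_
  simp [neg_smul]

lemma aux_minVecs {n : ℕ} (Λ : Set (Euc n)) (hmin : minNorm Λ = 1) :
    (∀ y ∈ Λ, y ≠ 0 → y ∉ minVecs Λ → 1 < ‖y‖) ∧ ∀ x ∈ minVecs Λ, ‖x‖ = 1 := by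
  constructor
  · intro y hy hy0 hyS
    have h1 : minNorm Λ ≤ ‖y‖ ^ 2 := by
      refine csInf_le ⟨0, ?_⟩ ⟨y, hy, hy0, rfl⟩
      rintro d ⟨x, _, _, rfl⟩
      positivity
    have h2 : ‖y‖ ^ 2 ≠ 1 := fun h => hyS ⟨hy, hy0, by rw [h, hmin]⟩
    rw [hmin] at h1
    have h3 : 1 < ‖y‖ ^ 2 := lt_of_le_of_ne h1 (Ne.symm h2)
    nlinarith [norm_nonneg y]
  · rintro x ⟨_, _, hx⟩
    rw [hmin] at hx
    nlinarith [norm_nonneg x]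

lemma aux_radFn_neg {n : ℕ} (K : Set (Euc n)) (hK : IsSymCB K) (x : Euc n) :
    radFn K (-x) = radFn K x := by
  unfold radFn
  congr 1
  ext t
  refine and_congr_right fun _ => ?_
  rw [smul_neg, ← Set.mem_neg, hK.symm]

lemma aux_eps (C N Υ δ η ε' : ℝ) (hδ : 0 < δ) (hη : 0 < η) (hε' : 0 < ε') :
    ∃ ε > (0 : ℝ), ε < 1 ∧ 2 * C * N * ε < 1 ∧ 1 + ε < (1 - 2 * C * N * ε) * (1 + δ) ∧
      (2 * C + 1) * (2 * Real.sqrt ε) ≤ η ∧ 2 * Υ * N * ε ≤ 1 ∧ 4 * Υ ^ 2 * N * ε ≤ ε' / 2 := by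
  have key : ∀ f g : ℝ → ℝ, Continuous f → Continuous g → f 0 < g 0 →
      ∀ᶠ ε in nhdsWithin (0 : ℝ) (Set.Ioi 0), f ε < g ε := fun f g hf hg h =>
    (((hf.tendsto 0).eventually_lt (hg.tendsto 0) h).filter_mono nhdsWithin_le_nhds)
  have h1 := key (fun ε => ε) (fun _ => 1) (by fun_prop) (by fun_prop) (by norm_num)
  have h2 := key (fun ε => 2 * C * N * ε) (fun _ => 1) (by fun_prop) (by fun_prop) (by norm_num)
  have h3 := key (fun ε => 1 + ε) (fun ε => (1 - 2 * C * N * ε) * (1 + δ)) (by fun_prop)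
    (by fun_prop) (by simpa using hδ)
  have h4 := key (fun ε => (2 * C + 1) * (2 * Real.sqrt ε)) (fun _ => η) (by fun_prop)
    (by fun_prop) (by simpa using hη)
  have h5 := key (fun ε => 2 * Υ * N * ε) (fun _ => 1) (by fun_prop) (by fun_prop) (by norm_num)
  have h6 := key (fun ε => 4 * Υ ^ 2 * N * ε) (fun _ => ε' / 2) (by fun_prop) (by fun_prop)
    (by simpa using hε')
  have h0 : ∀ᶠ ε in nhdsWithin (0 : ℝ) (Set.Ioi 0), (0 : ℝ) < ε := self_mem_nhdsWithin
  obtain ⟨ε, ⟨⟨⟨⟨⟨⟨a, b⟩, c⟩, d⟩, e⟩, f⟩, g⟩⟩ :=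
    ((((((h0.and h1).and h2).and h3).and h4).and h5).and h6).exists
  exact ⟨ε, a, b, c, d, e.le, f.le, g.le⟩

/-- Theorem 3.9(ii): if the critical lattice `Λ₀` of `Bⁿ`, unique up to
rotation, is minimally extreme with eutaxy coefficients `υ`, then for every `ε' > 0`, every
sufficiently spherical body `K` admits an admissible lattice `Λ'` with
`d(Λ')/d(Λ₀) ≤ 1 + Σ υ_x ρ_x + ε' Σ |ρ_x|` where `ρ_x = r_K(x) - 1`. -/
theorem admissible_lattice_radial_bound (n : ℕ) (hn : 2 ≤ n) (Λ₀ : Set (Euc n))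
    (hcrit : IsCriticalLattice Λ₀ (unitBall n))
    (huniq : ∀ Λ : Set (Euc n), IsCriticalLattice Λ (unitBall n) →
      ∃ U : Euc n ≃ₗᵢ[ℝ] Euc n, Λ = ⇑U '' Λ₀)
    (hmin : minNorm Λ₀ = 1)
    (hcard : (minVecs Λ₀).ncard = n * (n + 1))
    (hperfect : IsPerfectCfg (minVecs Λ₀))
    (υ : Euc n → ℝ)
    (hpos : ∀ x ∈ minVecs Λ₀, 0 < υ x) (hzero : ∀ x ∉ minVecs Λ₀, υ x = 0)
    (hυsym : ∀ x, υ x = υ (-x))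
    (heutaxy : ∑ᶠ x, υ x • projMap x = (LinearMap.id : Euc n →ₗ[ℝ] Euc n)) :
    ∀ ε' > (0 : ℝ), ∃ ε > (0 : ℝ), ∀ K : Set (Euc n), IsSymCB K →
      Metric.closedBall 0 (1 - ε) ⊆ K → K ⊆ Metric.closedBall 0 (1 + ε) →
      ∃ Λ' : Set (Euc n), IsLattice Λ' ∧ IsAdmissible Λ' K ∧
        latDet Λ' / latDet Λ₀ ≤
          1 + (∑ᶠ x ∈ minVecs Λ₀, υ x * (radFn K x - 1)) +
            ε' * ∑ᶠ x ∈ minVecs Λ₀, |radFn K x - 1| := by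
  classical
  intro ε' hε'
  set S := minVecs Λ₀ with hS
  have hΛ := hcrit.1
  obtain ⟨hlong, hunit⟩ := aux_minVecs Λ₀ hmin
  have hneg : ∀ x ∈ S, -x ∈ S := by
    rintro x ⟨h1, h2, h3⟩
    exact ⟨aux_lattice_neg Λ₀ hΛ x h1, neg_ne_zero.2 h2, by rw [norm_neg, h3]⟩
  have hfin : S.Finite := Set.finite_of_ncard_pos (by rw [hcard]; positivity)
  obtain ⟨C, hC, hinterp⟩ := aux_interp hn S hcard hunit hneg hperfect
  obtain ⟨δ, hδ, hgap⟩ := aux_gap Λ₀ hΛ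
  set s := hfin.toFinset with hs
  have hmem : ∀ x, x ∈ s ↔ x ∈ S := fun x => by simp [hs]
  have heut : ∑ x ∈ s, υ x • projMap x = (LinearMap.id : Euc n →ₗ[ℝ] Euc n) := by
    rw [← heutaxy, finsum_eq_sum_of_support_subset]
    intro x hx
    by_contra hxs
    apply hx
    have : x ∉ S := fun h => hxs ((hmem x).2 h)
    simp [hzero x this]
  set Υ := ∑ x ∈ s, υ x with hΥ
  have hυnn : ∀ x ∈ s, 0 ≤ υ x := fun x hx => (hpos x ((hmem x).1 hx)).le
  have hΥ0 : 0 ≤ Υ := Finset.sum_nonneg hυnn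
  set N : ℝ := (s.card : ℝ) with hN
  obtain ⟨η, hη, hη1, hηΥ⟩ : ∃ η > (0 : ℝ), η ≤ 1 ∧ η * Υ ≤ ε' / 2 := by
    refine ⟨min 1 (ε' / (2 * (Υ + 1))), by positivity, min_le_left _ _, ?_⟩
    calc min 1 (ε' / (2 * (Υ + 1))) * Υ ≤ ε' / (2 * (Υ + 1)) * (Υ + 1) := by
          gcongr
          · exact min_le_right _ _
          · linarith
      _ = ε' / 2 := by field_simp
  obtain ⟨ε, hε, hε1, hb1, hb2, hb3, hb4, hb5⟩ := aux_eps C N Υ δ η ε' hδ hη hε'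
  refine ⟨ε, hε, ?_⟩
  intro K hK hK1 hK2
  rw [finsum_mem_eq_finite_toFinset_sum _ hfin, finsum_mem_eq_finite_toFinset_sum _ hfin, ← hs]
  set ρ : Euc n → ℝ := fun x => radFn K x - 1 with hρ
  have hρneg : ∀ x, ρ (-x) = ρ x := fun x => by simp only [hρ]; rw [aux_radFn_neg K hK]
  change ∃ Λ' : Set (Euc n), IsLattice Λ' ∧ IsAdmissible Λ' K ∧
        latDet Λ' / latDet Λ₀ ≤ 1 + (∑ x ∈ s, υ x * ρ x) + ε' * ∑ x ∈ s, |ρ x|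
  set σ := ∑ x ∈ s, |ρ x| with hσ
  have hσ0 : 0 ≤ σ := Finset.sum_nonneg fun _ _ => abs_nonneg _
  have hρσ : ∀ x ∈ s, |ρ x| ≤ σ := fun x hx =>
    Finset.single_le_sum (f := fun x => |ρ x|) (fun _ _ => abs_nonneg _) hx
  have hbody := fun x (hx : x ∈ S) => aux_body K hK ε hε hε1 hK1 hK2 x (hunit x hx)
  have hσN : σ ≤ N * ε := by
    have := Finset.sum_le_card_nsmul s (fun x => |ρ x|) ε
      (fun x hx => (hbody x ((hmem x).1 hx)).1)
    simpa [nsmul_eq_mul] using this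
  obtain ⟨A, hAsym, hAval, hAnorm⟩ := hinterp (fun x => ρ x + η * σ) (2 * σ) (by positivity)
    (fun x => by simp only [hρneg]) (by
      intro x hx
      have h1 := hρσ x ((hmem x).2 hx)
      have h2 : η * σ ≤ σ := by nlinarith
      have h3 : 0 ≤ η * σ := by positivity
      calc |ρ x + η * σ| ≤ |ρ x| + |η * σ| := abs_add_le _ _
        _ ≤ 2 * σ := by rw [abs_of_nonneg h3]; linarith)
  have hCσ : C * (2 * σ) ≤ 2 * C * N * ε := by
    have := mul_le_mul_of_nonneg_left hσN hC
    linarith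
  obtain ⟨hdet0, hdet⟩ := aux_det A hAsym (C * (2 * σ)) (by linarith) hAnorm
  have htr : LinearMap.trace ℝ _ A = ∑ x ∈ s, υ x * ρ x + η * Υ * σ := by
    rw [aux_trace_eutaxy A s υ heut]
    have : ∀ x ∈ s, υ x * ⟪A x, x⟫ = υ x * ρ x + υ x * (η * σ) := fun x hx => by
      rw [hAval x ((hmem x).1 hx)]; ring
    rw [Finset.sum_congr rfl this, Finset.sum_add_distrib, ← Finset.sum_mul]
    ring
  have habs : |LinearMap.trace ℝ _ A| ≤ 2 * Υ * σ := by
    rw [htr]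
    have h1 : |∑ x ∈ s, υ x * ρ x| ≤ Υ * σ := by
      refine (Finset.abs_sum_le_sum_abs _ _).trans ?_
      rw [hΥ, Finset.sum_mul]
      refine Finset.sum_le_sum fun x hx => ?_
      rw [abs_mul, abs_of_nonneg (hυnn x hx)]
      exact mul_le_mul_of_nonneg_left (hρσ x hx) (hυnn x hx)
    have h2 : |η * Υ * σ| ≤ Υ * σ := by
      rw [abs_of_nonneg (by positivity), mul_assoc]
      have : 0 ≤ Υ * σ := by positivity
      nlinarith
    have := abs_add_le (∑ x ∈ s, υ x * ρ x) (η * Υ * σ)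
    linarith
  set τ := LinearMap.trace ℝ _ A with hτ
  have hτ1 : |τ| ≤ 1 := by
    have : 2 * Υ * σ ≤ 2 * Υ * (N * ε) := by gcongr
    linarith
  have hτ2 : τ ^ 2 ≤ ε' / 2 * σ := by
    have h1 : τ ^ 2 ≤ (2 * Υ * σ) ^ 2 := by
      rw [← sq_abs]
      gcongr
    have h2 : (2 * Υ * σ) ^ 2 ≤ 4 * Υ ^ 2 * (N * ε) * σ := by
      have : (2 * Υ * σ) ^ 2 = 4 * Υ ^ 2 * σ * σ := by ring
      rw [this]
      gcongr
    have h3 : 4 * Υ ^ 2 * N * ε * σ ≤ ε' / 2 * σ := by gcongr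
    linarith
  have hfinal : LinearMap.det (LinearMap.id + A) ≤ 1 + (∑ x ∈ s, υ x * ρ x) + ε' * σ := by
    have h1 := (abs_le.1 (Real.abs_exp_sub_one_sub_id_le hτ1)).2
    have h2 : η * Υ * σ ≤ ε' / 2 * σ := by gcongr
    linarith
  obtain ⟨hlat, hlatdet, hnn⟩ := aux_isLattice_image Λ₀ hΛ _ hdet0
  refine ⟨_, hlat, ?_, ?_⟩
  · rintro _ ⟨⟨y, hy, rfl⟩, hyK⟩
    by_contra hne
    have hy0 : y ≠ 0 := by
      rintro rfl
      exact hne (by simp)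
    have happ : (LinearMap.id + A : Euc n →ₗ[ℝ] Euc n) y = y + A y := rfl
    rw [happ] at hyK
    by_cases hyS : y ∈ S
    · obtain ⟨_, u, hu, hsep⟩ := hbody y hyS
      have h1 := hsep _ hyK
      have hrad : radFn K y = 1 + ρ y := by simp [hρ]
      rw [hrad] at h1
      have h2 : ⟪A y - ρ y • y, u⟫ < 0 := by
        rw [inner_sub_left, real_inner_smul_left]
        rw [inner_add_left] at h1
        linarith
      have h3 : ⟪A y - ρ y • y, y⟫ = η * σ := by
        rw [inner_sub_left, real_inner_smul_left, real_inner_self_eq_norm_sq, hunit y hyS,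
          hAval y hyS]
        ring
      have h4 : ⟪A y - ρ y • y, u⟫ = η * σ + ⟪A y - ρ y • y, u - y⟫ := by
        rw [inner_sub_right, h3]; ring
      have h5 : |⟪A y - ρ y • y, u - y⟫| ≤ η * σ := by
        refine (abs_real_inner_le_norm _ _).trans ?_
        have h6 : ‖A y - ρ y • y‖ ≤ (2 * C + 1) * σ := by
          refine (norm_sub_le _ _).trans ?_
          have h7 := hAnorm y
          rw [hunit y hyS] at h7
          rw [norm_smul, hunit y hyS, Real.norm_eq_abs]
          have h8 := hρσ y ((hmem y).2 hyS)
          linarith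
        calc ‖A y - ρ y • y‖ * ‖u - y‖ ≤ ((2 * C + 1) * σ) * (2 * Real.sqrt ε) := by gcongr
          _ = ((2 * C + 1) * (2 * Real.sqrt ε)) * σ := by ring
          _ ≤ η * σ := by gcongr
      have := (abs_le.1 h5).1
      linarith
    · have h1 := hgap y hy (hlong y hy hy0 hyS)
      have h2 := hK2 (interior_subset hyK)
      rw [mem_closedBall_zero_iff] at h2
      have h3 : ‖y‖ ≤ ‖y + A y‖ + ‖A y‖ := by
        have := norm_sub_le (y + A y) (A y)
        simpa using this
      have h4 := hAnorm y
      have h5 : C * (2 * σ) * ‖y‖ ≤ 2 * C * N * ε * ‖y‖ := by gcongr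
      have h6 : (1 - 2 * C * N * ε) * (1 + δ) ≤ (1 - 2 * C * N * ε) * ‖y‖ :=
        mul_le_mul_of_nonneg_left h1 (by linarith)
      linarith
  · refine div_le_of_le_mul₀ hnn (hdet0.le.trans hfinal) (hlatdet.trans ?_)
    gcongr

end
end

section
/- Given ε > 0, there exists ε' > 0 such that if K ⊂ ℝ³ is an origin-symmetric convex body with (1−ε')B³ ⊆ K ⊆ (1+ε')B³, then there is an invertible linear map T : ℝ³ → ℝ³ such that K' = TK satisfies (1−ε)B³ ⊆ K' ⊆ (1+ε)B³, ∫_{S²} r_{K'}(x) dσ(x) = 1, and ∫_{S²} r_{K'}(x) ⟨x, Ax⟩ dσ(x) = 0 for every symmetric linear map A : ℝ³ → ℝ³ with trace A = 0 (i.e., the radial function of K' has mean 1 and vanishing second spherical harmonic component). -/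
open scoped RealInnerProductSpace
open Metric MeasureTheory

noncomputable section

/-- Properties of the gauge that we use. -/
structure NearNorm (f : Euc 3 → ℝ) (η : ℝ) : Prop where
  add_le : ∀ u v, f (u + v) ≤ f u + f v
  smul : ∀ (t : ℝ) u, 0 ≤ t → f (t • u) = t * f u
  lower : ∀ u, (1 - η) * ‖u‖ ≤ f u
  upper : ∀ u, f u ≤ (1 + η) * ‖u‖

theorem unit_close (x w : Euc 3) (hx : ‖x‖ = 1) (hw : w ≠ 0) :
    ‖(‖w‖⁻¹ • w) - x‖ ≤ 2 * ‖w - x‖ := by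
  have hw' : 0 < ‖w‖ := norm_pos_iff.2 hw
  have h1 : (‖w‖⁻¹ • w) - x = (‖w‖⁻¹ • w - w) + (w - x) := by abel
  have h2 : ‖w‖⁻¹ • w - w = (‖w‖⁻¹ * (1 - ‖w‖)) • w := by
    rw [mul_sub, sub_smul, inv_mul_cancel₀ hw'.ne']; simp
  have h3 : ‖‖w‖⁻¹ • w - w‖ = |1 - ‖w‖| := by
    rw [h2, norm_smul, Real.norm_eq_abs, abs_mul, abs_inv, abs_norm]
    field_simp
  have h4 : |1 - ‖w‖| ≤ ‖w - x‖ := by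
    rw [← hx, abs_sub_comm]; exact abs_norm_sub_norm_le w x
  rw [h1]
  calc _ ≤ _ := norm_add_le _ _
    _ ≤ _ := by rw [h3]; linarith

theorem slope_upper {f : Euc 3 → ℝ} {δ : ℝ} (hδ : 0 < δ) (hδ1 : δ ≤ 1 / 10)
    (hf : NearNorm f (δ ^ 2)) (x u v : Euc 3) (hx : ‖x‖ = 1) (hu : ‖u - x‖ ≤ δ) :
    f u - f v ≤ ⟪x, u - v⟫ + 8 * δ * ‖u - v‖ := by
  rcases eq_or_ne u v with rfl | huv
  · simp
  have hh : 0 < ‖u - v‖ := norm_pos_iff.2 (sub_ne_zero.2 huv)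
  set h := ‖u - v‖ with hdef
  set e : Euc 3 := h⁻¹ • (u - v) with he
  have hen : ‖e‖ = 1 := by
    rw [he, norm_smul, norm_inv, Real.norm_eq_abs, abs_of_pos hh, ← hdef]; field_simp
  have heh : u - v = h • e := by rw [he, smul_smul, mul_inv_cancel₀ hh.ne', one_smul]
  set w := u + δ • e with hw
  have hwx : ‖w - x‖ ≤ 2 * δ := by
    have : w - x = (u - x) + δ • e := by rw [hw]; abel
    rw [this]
    refine (norm_add_le _ _).trans ?_
    rw [norm_smul, hen, Real.norm_eq_abs, abs_of_pos hδ]; linarith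
  have hun : ‖u‖ ≤ 1 + δ := by
    have := norm_sub_norm_le u x; linarith
  have hwn : ‖w‖ ≤ 1 + 2 * δ := by
    have := norm_sub_norm_le w x; linarith
  have hwn' : 1 - 2 * δ ≤ ‖w‖ := by
    have := norm_sub_norm_le x w; rw [norm_sub_rev] at this; linarith
  have hwpos : 0 < ‖w‖ := by linarith
  have hw0 : w ≠ 0 := norm_pos_iff.1 hwpos
  -- convexity
  have hconv : (h + δ) * f u ≤ δ * f v + h * f w := by
    rw [← hf.smul _ _ (by positivity), ← hf.smul _ _ hδ.le, ← hf.smul _ _ hh.le]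
    have : (h + δ) • u = δ • v + h • w := by
      have : v = u - h • e := by rw [← heh]; abel
      rw [this, hw]; module
    rw [this]; exact hf.add_le _ _
  have hfw : f w - f u ≤ ‖w‖ - ‖u‖ + 3 * δ ^ 2 := by
    have h1 := hf.upper w
    have h2 := hf.lower u
    nlinarith [sq_nonneg δ]
  -- norm gradient
  have hng : ‖w‖ - ‖u‖ ≤ δ * ⟪e, ‖w‖⁻¹ • w⟫ := by
    have h1 : ⟪u, ‖w‖⁻¹ • w⟫ ≤ ‖u‖ := by
      refine (real_inner_le_norm _ _).trans ?_
      rw [norm_smul, norm_inv, norm_norm, inv_mul_cancel₀ hwpos.ne', mul_one]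
    have h2 : ⟪w, ‖w‖⁻¹ • w⟫ = ‖w‖ := by
      rw [real_inner_smul_right, real_inner_self_eq_norm_sq]; field_simp
    have h3 : ⟪w, ‖w‖⁻¹ • w⟫ = ⟪u, ‖w‖⁻¹ • w⟫ + δ * ⟪e, ‖w‖⁻¹ • w⟫ := by
      conv_lhs => rw [hw]
      rw [inner_add_left, real_inner_smul_left]
    linarith
  have hin : ⟪e, ‖w‖⁻¹ • w⟫ ≤ ⟪x, e⟫ + 4 * δ := by
    have h1 : ⟪e, ‖w‖⁻¹ • w⟫ = ⟪x, e⟫ + ⟪e, ‖w‖⁻¹ • w - x⟫ := by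
      rw [inner_sub_right, real_inner_comm x e]; ring
    have h2 := real_inner_le_norm e (‖w‖⁻¹ • w - x)
    have h3 := unit_close x w hx hw0
    rw [hen] at h2
    linarith
  have key : δ * (f u - f v) ≤ δ * (h * (⟪x, e⟫ + 8 * δ)) := by
    have h1 : δ * (f u - f v) ≤ h * (f w - f u) := by linarith
    have h2 : f w - f u ≤ δ * (⟪x, e⟫ + 8 * δ) := by nlinarith
    nlinarith
  have := le_of_mul_le_mul_left key hδ
  rw [heh, real_inner_smul_right]
  linarith

theorem near_one {f : Euc 3 → ℝ} {δ : ℝ} (hδ : 0 < δ) (hδ1 : δ ≤ 1 / 10)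
    (hf : NearNorm f (δ ^ 2)) (x u : Euc 3) (hx : ‖x‖ = 1) (hu : ‖u - x‖ ≤ δ) :
    |f u - 1| ≤ 2 * δ := by
  have hun : ‖u‖ ≤ 1 + δ := by
    have := norm_sub_norm_le u x; linarith
  have hun' : 1 - δ ≤ ‖u‖ := by
    have := norm_sub_norm_le x u; rw [norm_sub_rev] at this; linarith
  have h1 := hf.upper u
  have h2 := hf.lower u
  rw [abs_le]; constructor <;> nlinarith [sq_nonneg δ]

theorem inv_slope {f : Euc 3 → ℝ} {δ : ℝ} (hδ : 0 < δ) (hδ1 : δ ≤ 1 / 50)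
    (hf : NearNorm f (δ ^ 2)) (x u v : Euc 3) (hx : ‖x‖ = 1) (hu : ‖u - x‖ ≤ δ)
    (hv : ‖v - x‖ ≤ δ) :
    |⟪x, u - v⟫ + ((f u)⁻¹ - (f v)⁻¹)| ≤ 30 * δ * ‖u - v‖ := by
  have hδ2 : δ ≤ 1 / 10 := by linarith
  have h1 := slope_upper hδ hδ2 hf x u v hx hu
  have h2 := slope_upper hδ hδ2 hf x v u hx hv
  have h3 := abs_le.1 (near_one hδ hδ2 hf x u hx hu)
  have h4 := abs_le.1 (near_one hδ hδ2 hf x v hx hv)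
  have h5 : |⟪x, u - v⟫| ≤ ‖u - v‖ := by
    have := abs_real_inner_le_norm x (u - v); rwa [hx, one_mul] at this
  have h6 : ⟪x, v - u⟫ = - ⟪x, u - v⟫ := by rw [← inner_neg_right]; simp
  rw [h6, norm_sub_rev v u] at h2
  set d := ⟪x, u - v⟫
  set h := ‖u - v‖
  have hh : 0 ≤ h := norm_nonneg _
  generalize f u = p at *
  generalize f v = q at *
  have hp : 0 < p := by linarith
  have hq : 0 < q := by linarith
  have hpq : 9 / 10 ≤ p * q := by nlinarith
  have e1 : d + (p⁻¹ - q⁻¹) = (d * (p * q - 1) - (p - q - d)) / (p * q) := by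
    field_simp; ring
  have h7 : |p * q - 1| ≤ 5 * δ := by
    rw [abs_le]; constructor <;> nlinarith
  have h8 : |p - q - d| ≤ 8 * δ * h := by
    rw [abs_le]; constructor <;> linarith
  have h9 : |d * (p * q - 1)| ≤ h * (5 * δ) := by
    rw [abs_mul]; gcongr
  rw [e1, abs_div, abs_of_pos (by positivity : 0 < p * q), div_le_iff₀ (by positivity)]
  have := abs_sub (d * (p * q - 1)) (p - q - d)
  have hδh : 0 ≤ δ * h := by positivity
  nlinarith

/-- The linear map with matrix `S`. -/
def lin (S : Fin 3 → Fin 3 → ℝ) : Euc 3 →ₗ[ℝ] Euc 3 := Matrix.toEuclideanLin (Matrix.of S)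

theorem lin_apply (S : Fin 3 → Fin 3 → ℝ) (x : Euc 3) (i : Fin 3) :
    lin S x i = S i 0 * x 0 + S i 1 * x 1 + S i 2 * x 2 := by
  simp [lin, Matrix.toLpLin_apply, Matrix.mulVec, dotProduct, Fin.sum_univ_three]

theorem norm_sq3 (x : Euc 3) : ‖x‖ ^ 2 = x 0 ^ 2 + x 1 ^ 2 + x 2 ^ 2 := by
  rw [EuclideanSpace.norm_sq_eq]; simp [Fin.sum_univ_three]

/-- The hypotheses on the measure. -/
structure RotInv (σ : Measure (Euc 3)) : Prop where
  prob : IsProbabilityMeasure σ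
  sph : σ (Metric.sphere (0 : Euc 3) 1)ᶜ = 0
  inv : ∀ U : Euc 3 ≃ₗᵢ[ℝ] Euc 3, Measure.map (⇑U) σ = σ

theorem RotInv.ae {σ : Measure (Euc 3)} (h : RotInv σ) : ∀ᵐ x ∂σ, ‖x‖ = 1 := by
  rw [ae_iff]
  convert h.sph using 2
  ext x; simp

theorem RotInv.integral_lin {σ : Measure (Euc 3)} (h : RotInv σ) (S : Fin 3 → Fin 3 → ℝ)
    (hS : ∀ x : Euc 3, (lin S x 0) ^ 2 + (lin S x 1) ^ 2 + (lin S x 2) ^ 2 =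
      x 0 ^ 2 + x 1 ^ 2 + x 2 ^ 2)
    (g : Euc 3 → ℝ) : ∫ x, g (lin S x) ∂σ = ∫ x, g x ∂σ := by
  have hn : ∀ x, ‖lin S x‖ = ‖x‖ := fun x => by
    have := hS x
    rw [← norm_sq3, ← norm_sq3] at this
    exact (sq_eq_sq₀ (norm_nonneg _) (norm_nonneg _)).1 this
  let U : Euc 3 ≃ₗᵢ[ℝ] Euc 3 := LinearIsometry.toLinearIsometryEquiv ⟨lin S, hn⟩ rfl
  have hU : ∀ x, U x = lin S x := fun x => rfl
  conv_rhs => rw [← h.inv U]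
  exact (U.toHomeomorph.measurableEmbedding.integral_map (g := g) (μ := σ)).symm

theorem abs_coord_le (x : Euc 3) (hx : ‖x‖ = 1) (i : Fin 3) : |x i| ≤ 1 := by
  rw [← hx, ← Real.norm_eq_abs]; exact PiLp.norm_apply_le x i

theorem RotInv.integrable {σ : Measure (Euc 3)} (h : RotInv σ) {g : Euc 3 → ℝ} (hg : Measurable g)
    (C : ℝ) (hC : ∀ x, ‖x‖ = 1 → |g x| ≤ C) : Integrable g σ := by
  have := h.prob
  refine Integrable.of_bound hg.aestronglyMeasurable C ?_
  filter_upwards [h.ae] with x hx using hC x hx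

theorem RotInv.integrable_cont {σ : Measure (Euc 3)} (h : RotInv σ) {g : Euc 3 → ℝ}
    (hg : Continuous g) : Integrable g σ := by
  obtain ⟨C, hC⟩ := (isCompact_sphere (0 : Euc 3) 1).exists_bound_of_continuousOn hg.continuousOn
  exact h.integrable hg.measurable C fun x hx => hC x (by simpa using hx)

/-- monomial moment -/
def mm (σ : Measure (Euc 3)) (a b c : ℕ) : ℝ := ∫ x, x 0 ^ a * x 1 ^ b * x 2 ^ c ∂σ

theorem RotInv.neg0 {σ : Measure (Euc 3)} (h : RotInv σ) (a b c : ℕ) :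
    mm σ a b c = (-1) ^ a * mm σ a b c := by
  have := h.integral_lin ![![-1, 0, 0], ![0, 1, 0], ![0, 0, 1]]
    (by intro x; simp [lin_apply]) (fun x => x 0 ^ a * x 1 ^ b * x 2 ^ c)
  unfold mm
  rw [← integral_const_mul]
  conv_lhs => rw [← this]
  congr 1; ext x
  simp [lin_apply]
  rw [neg_pow]; ring

theorem RotInv.swap01 {σ : Measure (Euc 3)} (h : RotInv σ) (a b c : ℕ) :
    mm σ a b c = mm σ b a c := by
  have := h.integral_lin ![![0, 1, 0], ![1, 0, 0], ![0, 0, 1]]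
    (by intro x; simp [lin_apply]; ring) (fun x => x 0 ^ a * x 1 ^ b * x 2 ^ c)
  unfold mm
  conv_lhs => rw [← this]
  congr 1; ext x
  simp [lin_apply]
  left; ring

theorem RotInv.swap12 {σ : Measure (Euc 3)} (h : RotInv σ) (a b c : ℕ) :
    mm σ a b c = mm σ a c b := by
  have := h.integral_lin ![![1, 0, 0], ![0, 0, 1], ![0, 1, 0]]
    (by intro x; simp [lin_apply]; ring) (fun x => x 0 ^ a * x 1 ^ b * x 2 ^ c)
  unfold mm
  conv_lhs => rw [← this]
  congr 1; ext x
  simp [lin_apply]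
  ring

theorem RotInv.odd0 {σ : Measure (Euc 3)} (h : RotInv σ) (a b c : ℕ) (ha : Odd a) :
    mm σ a b c = 0 := by
  have := h.neg0 a b c
  rw [ha.neg_one_pow] at this
  linarith

theorem RotInv.odd1 {σ : Measure (Euc 3)} (h : RotInv σ) (a b c : ℕ) (ha : Odd b) :
    mm σ a b c = 0 := by
  rw [h.swap01]; exact h.odd0 _ _ _ ha

theorem RotInv.odd2 {σ : Measure (Euc 3)} (h : RotInv σ) (a b c : ℕ) (ha : Odd c) :
    mm σ a b c = 0 := by
  rw [h.swap12]; exact h.odd1 _ _ _ ha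

theorem RotInv.int_mm {σ : Measure (Euc 3)} (h : RotInv σ) (a b c : ℕ) :
    Integrable (fun x : Euc 3 => x 0 ^ a * x 1 ^ b * x 2 ^ c) σ :=
  h.integrable_cont (by fun_prop)

theorem RotInv.rot {σ : Measure (Euc 3)} (h : RotInv σ) : mm σ 4 0 0 = 3 * mm σ 2 2 0 := by
  set s : ℝ := √2 / 2 with hs
  have hs2 : s ^ 2 = 1 / 2 := by
    rw [hs, div_pow, Real.sq_sqrt (by norm_num)]; norm_num
  have h4 : s ^ 4 = 1 / 4 := by
    have : s ^ 4 = (s ^ 2) ^ 2 := by ring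
    rw [this, hs2]; norm_num
  have := h.integral_lin ![![s, s, 0], ![s, -s, 0], ![0, 0, 1]]
    (by intro x; simp [lin_apply]; linear_combination (2 * x 0 ^ 2 + 2 * x 1 ^ 2) * hs2)
    (fun x => x 0 ^ 4 * x 1 ^ 0 * x 2 ^ 0)
  have e : ∀ x : Euc 3, (fun x : Euc 3 => x 0 ^ 4 * x 1 ^ 0 * x 2 ^ 0)
      (lin ![![s, s, 0], ![s, -s, 0], ![0, 0, 1]] x) =
      (1 / 4) * (x 0 ^ 4 * x 1 ^ 0 * x 2 ^ 0) + (x 0 ^ 3 * x 1 ^ 1 * x 2 ^ 0)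
      + (3 / 2) * (x 0 ^ 2 * x 1 ^ 2 * x 2 ^ 0) + (x 0 ^ 1 * x 1 ^ 3 * x 2 ^ 0)
      + (1 / 4) * (x 0 ^ 0 * x 1 ^ 4 * x 2 ^ 0) := by
    intro x
    simp [lin_apply]
    linear_combination (x 0 + x 1) ^ 4 * h4
  simp_rw [e] at this
  rw [integral_add, integral_add, integral_add, integral_add, integral_const_mul,
    integral_const_mul, integral_const_mul] at this
  · change (1 / 4) * mm σ 4 0 0 + mm σ 3 1 0 + (3 / 2) * mm σ 2 2 0 + mm σ 1 3 0
      + (1 / 4) * mm σ 0 4 0 = mm σ 4 0 0 at this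
    rw [h.odd0 3 1 0 (by decide), h.odd0 1 3 0 (by decide), h.swap01 0 4 0] at this
    linarith
  all_goals exact h.integrable_cont (by fun_prop)

theorem RotInv.total {σ : Measure (Euc 3)} (h : RotInv σ) : 3 * mm σ 4 0 0 + 6 * mm σ 2 2 0 = 1 := by
  have := h.prob
  have e : ∫ x : Euc 3, (1 : ℝ) ∂σ = ∫ x : Euc 3,
      ((x 0 ^ 4 * x 1 ^ 0 * x 2 ^ 0) + (x 0 ^ 0 * x 1 ^ 4 * x 2 ^ 0)
      + (x 0 ^ 0 * x 1 ^ 0 * x 2 ^ 4) + 2 * (x 0 ^ 2 * x 1 ^ 2 * x 2 ^ 0)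
      + 2 * (x 0 ^ 2 * x 1 ^ 0 * x 2 ^ 2) + 2 * (x 0 ^ 0 * x 1 ^ 2 * x 2 ^ 2)) ∂σ := by
    apply integral_congr_ae
    filter_upwards [h.ae] with x hx
    have := norm_sq3 x
    rw [hx] at this
    have h2 : (1 : ℝ) = (x 0 ^ 2 + x 1 ^ 2 + x 2 ^ 2) ^ 2 := by rw [← this]; norm_num
    rw [h2]; ring
  rw [integral_add, integral_add, integral_add, integral_add, integral_add, integral_const_mul,
    integral_const_mul, integral_const_mul] at e
  · change _ = mm σ 4 0 0 + mm σ 0 4 0 + mm σ 0 0 4 + 2 * mm σ 2 2 0 + 2 * mm σ 2 0 2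
      + 2 * mm σ 0 2 2 at e
    rw [h.swap12 0 0 4, h.swap01 0 4 0, h.swap01 0 2 2, h.swap12 2 0 2] at e
    simp at e
    linarith
  all_goals exact h.integrable_cont (by fun_prop)

theorem RotInv.m4 {σ : Measure (Euc 3)} (h : RotInv σ) :
    mm σ 4 0 0 = 1 / 5 ∧ mm σ 2 2 0 = 1 / 15 := by
  have h1 := h.rot
  have h2 := h.total
  constructor <;> linarith

/-- Kronecker delta -/
def kd (i j : Fin 3) : ℝ := if i = j then 1 else 0

theorem RotInv.mom {σ : Measure (Euc 3)} (h : RotInv σ) (i j k l : Fin 3) :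
    ∫ x, x i * x j * (x k * x l) ∂σ =
      (kd i j * kd k l + kd i k * kd j l + kd i l * kd j k) / 15 := by
  let c : Fin 3 → ℕ := fun m => (if i = m then 1 else 0) + (if j = m then 1 else 0)
    + (if k = m then 1 else 0) + (if l = m then 1 else 0)
  have e : ∫ x, x i * x j * (x k * x l) ∂σ = mm σ (c 0) (c 1) (c 2) := by
    unfold mm
    congr 1; ext x
    have : ∀ i : Fin 3, x i = x 0 ^ (if i = 0 then 1 else 0) * x 1 ^ (if i = 1 then 1 else 0)
        * x 2 ^ (if i = 2 then 1 else 0) := by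
      intro i; fin_cases i <;> simp
    rw [this i, this j, this k, this l]
    simp only [c, pow_add]
    ring
  rw [e]
  have a1 := h.m4.1
  have a2 : mm σ 0 4 0 = 1 / 5 := by rw [h.swap01, a1]
  have a3 : mm σ 0 0 4 = 1 / 5 := by rw [h.swap12, a2]
  have b1 := h.m4.2
  have b2 : mm σ 2 0 2 = 1 / 15 := by rw [h.swap12, b1]
  have b3 : mm σ 0 2 2 = 1 / 15 := by rw [h.swap01, b2]
  fin_cases i <;> fin_cases j <;> fin_cases k <;> fin_cases l <;>
    simp [c, kd, a1, a2, a3, b1, b2, b3] <;>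
    first
    | exact h.odd0 _ _ _ (by decide)
    | exact h.odd1 _ _ _ (by decide)
    | exact h.odd2 _ _ _ (by decide)
    | norm_num

theorem RotInv.mom2 {σ : Measure (Euc 3)} (h : RotInv σ) (i j : Fin 3) :
    ∫ x, x i * x j ∂σ = kd i j / 3 := by
  have e : ∫ x, x i * x j ∂σ = ∫ x, (x i * x j * (x 0 * x 0) + x i * x j * (x 1 * x 1)
      + x i * x j * (x 2 * x 2)) ∂σ := by
    apply integral_congr_ae
    filter_upwards [h.ae] with x hx
    have := norm_sq3 x
    rw [hx] at this
    linear_combination (x i * x j) * this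
  rw [e, integral_add, integral_add, h.mom, h.mom, h.mom]
  · fin_cases i <;> fin_cases j <;> simp [kd] <;> norm_num
  all_goals exact h.integrable_cont (by fun_prop)

/-- The dual kernel. -/
def MM (i j : Fin 3) (x : Euc 3) : ℝ := (15 * (x i * x j) - 3 * kd i j) / 2

/-- quadratic form -/
def qf (S : Fin 3 → Fin 3 → ℝ) (x : Euc 3) : ℝ := ⟪x, lin S x⟫

theorem qf_eq (S : Fin 3 → Fin 3 → ℝ) (x : Euc 3) :
    qf S x = ∑ k, ∑ l, S k l * (x k * x l) := by
  simp [qf, PiLp.inner_apply, lin_apply, Fin.sum_univ_three]; ring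

theorem RotInv.dsum {σ : Measure (Euc 3)} (h : RotInv σ) (S : Fin 3 → Fin 3 → ℝ)
    (g : Fin 3 → Fin 3 → Euc 3 → ℝ) (hg : ∀ k l, Continuous (g k l)) :
    ∫ x, ∑ k, ∑ l, S k l * g k l x ∂σ = ∑ k, ∑ l, S k l * ∫ x, g k l x ∂σ := by
  rw [integral_finsetSum _ fun k _ => h.integrable_cont (by fun_prop)]
  refine Finset.sum_congr rfl fun k _ => ?_
  rw [integral_finsetSum _ fun l _ => h.integrable_cont (by fun_prop)]
  refine Finset.sum_congr rfl fun l _ => ?_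
  rw [integral_const_mul]

theorem RotInv.mom2_qf {σ : Measure (Euc 3)} (h : RotInv σ) (S : Fin 3 → Fin 3 → ℝ) :
    ∫ x, qf S x ∂σ = (S 0 0 + S 1 1 + S 2 2) / 3 := by
  simp_rw [qf_eq]
  rw [h.dsum S (fun k l x => x k * x l) (fun k l => by fun_prop)]
  simp_rw [h.mom2]
  simp [Fin.sum_univ_three, kd]; ring

theorem RotInv.MM_qf {σ : Measure (Euc 3)} (h : RotInv σ) (S : Fin 3 → Fin 3 → ℝ)
    (hS : ∀ i j, S i j = S j i) (i j : Fin 3) :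
    ∫ x, MM i j x * qf S x ∂σ = S i j := by
  have hc : Continuous (qf S) := by
    have : qf S = fun x => ∑ k, ∑ l, S k l * (x k * x l) := funext (qf_eq S)
    rw [this]; fun_prop
  have e : ∀ x, MM i j x * qf S x = (15 / 2) * (∑ k, ∑ l, S k l * (x i * x j * (x k * x l)))
      - (3 / 2 * kd i j) * qf S x := by
    intro x
    have : ∑ k, ∑ l, S k l * (x i * x j * (x k * x l)) = x i * x j * qf S x := by
      rw [qf_eq]; simp only [Fin.sum_univ_three]; ring
    rw [this, MM]; ring
  simp_rw [e]
  rw [integral_sub (h.integrable_cont (by fun_prop)) (h.integrable_cont (by fun_prop)),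
    integral_const_mul, integral_const_mul, h.mom2_qf,
    h.dsum S (fun k l x => x i * x j * (x k * x l)) (fun k l => by fun_prop)]
  simp_rw [h.mom]
  have h01 := hS 0 1
  have h02 := hS 0 2
  have h12 := hS 1 2
  fin_cases i <;> fin_cases j <;> simp [kd, Fin.sum_univ_three] <;> linarith

theorem RotInv.MM_one {σ : Measure (Euc 3)} (h : RotInv σ) (i j : Fin 3) :
    ∫ x, MM i j x ∂σ = kd i j := by
  have := h.prob
  unfold MM
  rw [integral_div, integral_sub, integral_const_mul, h.mom2]
  · simp; ring
  all_goals exact h.integrable_cont (by fun_prop)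

theorem lin_sub (S S' : Fin 3 → Fin 3 → ℝ) (x : Euc 3) :
    lin S x - lin S' x = lin (S - S') x := by
  ext i; simp [lin_apply]; ring

theorem lin_kd (x : Euc 3) : lin kd x = x := by
  ext i; rw [lin_apply]; fin_cases i <;> simp [kd]

theorem entry_le (D : Fin 3 → Fin 3 → ℝ) (i j : Fin 3) : |D i j| ≤ ‖D‖ :=
  (norm_le_pi_norm (D i) j).trans (norm_le_pi_norm D i)

theorem lin_norm (D : Fin 3 → Fin 3 → ℝ) (x : Euc 3) : ‖lin D x‖ ≤ 6 * ‖D‖ * ‖x‖ := by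
  have hc : ∀ i, (lin D x i) ^ 2 ≤ (3 * ‖D‖ * ‖x‖) ^ 2 := by
    intro i
    rw [sq_le_sq, abs_of_nonneg (by positivity : 0 ≤ 3 * ‖D‖ * ‖x‖), lin_apply]
    have h : ∀ j, |D i j * x j| ≤ ‖D‖ * ‖x‖ := fun j => by
      rw [abs_mul]
      exact mul_le_mul (entry_le D i j) (PiLp.norm_apply_le x j) (abs_nonneg _) (norm_nonneg _)
    have h0 := abs_le.1 (h 0)
    have h1 := abs_le.1 (h 1)
    have h2 := abs_le.1 (h 2)
    rw [abs_le]; constructor <;> linarith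
  refine (sq_le_sq₀ (norm_nonneg _) (by positivity)).1 ?_
  rw [norm_sq3]
  nlinarith [hc 0, hc 1, hc 2, sq_nonneg (‖D‖ * ‖x‖)]

theorem MM_bound (i j : Fin 3) (x : Euc 3) (hx : ‖x‖ = 1) : |MM i j x| ≤ 9 := by
  have h1 : |x i * x j| ≤ 1 := by
    rw [abs_mul]; exact mul_le_one₀ (abs_coord_le x hx i) (abs_nonneg _) (abs_coord_le x hx j)
  have h2 : 0 ≤ kd i j ∧ kd i j ≤ 1 := by unfold kd; split_ifs <;> simp
  have := abs_le.1 h1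
  unfold MM
  rw [abs_le]; constructor <;> linarith

theorem kd_symm (i j : Fin 3) : kd i j = kd j i := by
  simp [kd, eq_comm]

theorem MM_symm (i j : Fin 3) (x : Euc 3) : MM i j x = MM j i x := by
  unfold MM; rw [mul_comm (x i), kd_symm]

theorem MM_cont (i j : Fin 3) : Continuous (MM i j) := by unfold MM; fun_prop

theorem qf_cont (S : Fin 3 → Fin 3 → ℝ) : Continuous (qf S) := by
  have : qf S = fun x => ∑ k, ∑ l, S k l * (x k * x l) := funext (qf_eq S)
  rw [this]; fun_prop

theorem lin_cont (S : Fin 3 → Fin 3 → ℝ) : Continuous (lin S) :=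
  LinearMap.continuous_of_finiteDimensional _

/-- deviation of the radial function from one -/
def dv (f : Euc 3 → ℝ) (S : Fin 3 → Fin 3 → ℝ) (x : Euc 3) : ℝ := (f (lin S x))⁻¹ - 1

/-- the Newton-type map -/
def Psi (σ : Measure (Euc 3)) (f : Euc 3 → ℝ) (S : Fin 3 → Fin 3 → ℝ) : Fin 3 → Fin 3 → ℝ :=
  fun i j => ∫ x, MM i j x * (qf S x + dv f S x) ∂σ

theorem lin_close {δ : ℝ} (S : Fin 3 → Fin 3 → ℝ) (hS : S ∈ closedBall kd (δ / 6)) (x : Euc 3) :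
    ‖lin S x - x‖ ≤ δ * ‖x‖ := by
  have e : lin S x - x = lin (S - kd) x := by rw [← lin_sub, lin_kd]
  rw [e]
  rw [mem_closedBall, dist_eq_norm] at hS
  refine (lin_norm _ _).trans ?_
  have := norm_nonneg x
  nlinarith

theorem dv_bound {f : Euc 3 → ℝ} {δ : ℝ} (hδ : 0 < δ) (hδ1 : δ ≤ 1 / 50)
    (hf : NearNorm f (δ ^ 2)) (S : Fin 3 → Fin 3 → ℝ) (hS : S ∈ closedBall kd (δ / 6))
    (x : Euc 3) (hx : ‖x‖ = 1) : |dv f S x| ≤ 1 := by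
  have h := lin_close S hS x
  rw [hx, mul_one] at h
  have h2 := abs_le.1 (near_one hδ (by linarith) hf x _ hx h)
  have hp : 0 < f (lin S x) := by linarith
  unfold dv
  have h3 : (f (lin S x))⁻¹ ≤ 2 := inv_le_of_inv_le₀ (by norm_num) (by linarith)
  have h4 : 0 < (f (lin S x))⁻¹ := by positivity
  rw [abs_le]; constructor <;> linarith

theorem dv_meas {f : Euc 3 → ℝ} (hc : Continuous f) (S : Fin 3 → Fin 3 → ℝ) :
    Measurable (dv f S) := by
  unfold dv
  exact ((hc.comp (lin_cont S)).measurable.inv).sub_const 1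

theorem dv_int {σ : Measure (Euc 3)} (h : RotInv σ) {f : Euc 3 → ℝ} {δ : ℝ} (hδ : 0 < δ)
    (hδ1 : δ ≤ 1 / 50) (hf : NearNorm f (δ ^ 2)) (hc : Continuous f) (S : Fin 3 → Fin 3 → ℝ)
    (hS : S ∈ closedBall kd (δ / 6)) : Integrable (dv f S) σ :=
  h.integrable (dv_meas hc S) 1 (dv_bound hδ hδ1 hf S hS)

theorem MM_dv_int {σ : Measure (Euc 3)} (h : RotInv σ) {f : Euc 3 → ℝ} {δ : ℝ} (hδ : 0 < δ)
    (hδ1 : δ ≤ 1 / 50) (hf : NearNorm f (δ ^ 2)) (hc : Continuous f) (S : Fin 3 → Fin 3 → ℝ)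
    (hS : S ∈ closedBall kd (δ / 6)) (i j : Fin 3) :
    Integrable (fun x => MM i j x * dv f S x) σ := by
  refine h.integrable ((MM_cont i j).measurable.mul (dv_meas hc S)) 9 fun x hx => ?_
  rw [abs_mul]
  have h1 := MM_bound i j x hx
  have h2 := dv_bound hδ hδ1 hf S hS x hx
  nlinarith [abs_nonneg (MM i j x), abs_nonneg (dv f S x)]

theorem MM_qf_int {σ : Measure (Euc 3)} (h : RotInv σ) (S : Fin 3 → Fin 3 → ℝ) (i j : Fin 3) :
    Integrable (fun x => MM i j x * qf S x) σ :=
  h.integrable_cont ((MM_cont i j).mul (qf_cont S))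

theorem Psi_eq {σ : Measure (Euc 3)} (h : RotInv σ) {f : Euc 3 → ℝ} {δ : ℝ} (hδ : 0 < δ)
    (hδ1 : δ ≤ 1 / 50) (hf : NearNorm f (δ ^ 2)) (hc : Continuous f) (S : Fin 3 → Fin 3 → ℝ)
    (hS : S ∈ closedBall kd (δ / 6)) (i j : Fin 3) :
    Psi σ f S i j = ∫ x, MM i j x * qf S x ∂σ + ∫ x, MM i j x * dv f S x ∂σ := by
  unfold Psi
  simp_rw [mul_add]
  exact integral_add (MM_qf_int h S i j) (MM_dv_int h hδ hδ1 hf hc S hS i j)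

theorem abs_integral_le {σ : Measure (Euc 3)} (h : RotInv σ) (g : Euc 3 → ℝ) (C : ℝ)
    (hC : ∀ x, ‖x‖ = 1 → |g x| ≤ C) : |∫ x, g x ∂σ| ≤ C := by
  have := h.prob
  have := norm_integral_le_of_norm_le_const (μ := σ) (f := g) (C := C)
    (by filter_upwards [h.ae] with x hx using hC x hx)
  simpa using this

theorem Psi_contr {σ : Measure (Euc 3)} (h : RotInv σ) {f : Euc 3 → ℝ} {δ : ℝ} (hδ : 0 < δ)
    (hδ1 : δ ≤ 1 / 4000) (hf : NearNorm f (δ ^ 2)) (hc : Continuous f)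
    (S S' : Fin 3 → Fin 3 → ℝ)
    (hS : S ∈ closedBall kd (δ / 6)) (hS' : S' ∈ closedBall kd (δ / 6)) :
    dist (Psi σ f S) (Psi σ f S') ≤ (1 / 2) * dist S S' := by
  have hδ2 : δ ≤ 1 / 50 := by linarith
  refine (dist_pi_le_iff (by positivity)).2 fun i => (dist_pi_le_iff (by positivity)).2 fun j => ?_
  rw [Real.dist_eq, Psi_eq h hδ hδ2 hf hc S hS, Psi_eq h hδ hδ2 hf hc S' hS', dist_eq_norm]
  rw [← integral_add (MM_qf_int h S i j) (MM_dv_int h hδ hδ2 hf hc S hS i j),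
    ← integral_add (MM_qf_int h S' i j) (MM_dv_int h hδ hδ2 hf hc S' hS' i j),
    ← integral_sub (by exact (MM_qf_int h S i j).add (MM_dv_int h hδ hδ2 hf hc S hS i j))
      (by exact (MM_qf_int h S' i j).add (MM_dv_int h hδ hδ2 hf hc S' hS' i j))]
  refine abs_integral_le h _ _ fun x hx => ?_
  have h1 := lin_close S hS x
  have h2 := lin_close S' hS' x
  rw [hx, mul_one] at h1 h2
  have h3 := inv_slope hδ hδ2 hf x _ _ hx h1 h2
  have h4 : ‖lin S x - lin S' x‖ ≤ 6 * ‖S - S'‖ := by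
    rw [lin_sub]; simpa [hx] using lin_norm (S - S') x
  have e : MM i j x * qf S x + MM i j x * dv f S x - (MM i j x * qf S' x + MM i j x * dv f S' x)
      = MM i j x * (⟪x, lin S x - lin S' x⟫ + ((f (lin S x))⁻¹ - (f (lin S' x))⁻¹)) := by
    rw [inner_sub_right]; unfold dv qf; ring
  rw [e, abs_mul]
  calc _ ≤ 9 * (30 * δ * (6 * ‖S - S'‖)) := by
        refine mul_le_mul (MM_bound i j x hx) (h3.trans ?_) (abs_nonneg _) (by norm_num)
        gcongr
    _ ≤ _ := by nlinarith [norm_nonneg (S - S')]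

theorem Psi_one {σ : Measure (Euc 3)} (h : RotInv σ) {f : Euc 3 → ℝ} {δ : ℝ} (hδ : 0 < δ)
    (hδ1 : δ ≤ 1 / 4000) (hf : NearNorm f (δ ^ 2)) (hc : Continuous f) :
    dist (Psi σ f kd) kd ≤ δ / 12 := by
  have hδ2 : δ ≤ 1 / 50 := by linarith
  have hk : kd ∈ closedBall kd (δ / 6) := mem_closedBall_self (by positivity)
  refine (dist_pi_le_iff (by positivity)).2 fun i => (dist_pi_le_iff (by positivity)).2 fun j => ?_
  rw [Real.dist_eq, Psi_eq h hδ hδ2 hf hc kd hk,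
    h.MM_qf kd kd_symm, add_sub_cancel_left]
  refine abs_integral_le h _ _ fun x hx => ?_
  have h1 := hf.upper x
  have h2 := hf.lower x
  rw [hx, mul_one] at h1 h2
  have hd : |dv f kd x| ≤ 2 * δ ^ 2 := by
    unfold dv
    rw [lin_kd]
    generalize f x = p at *
    have hp : 9 / 10 ≤ p := by nlinarith
    have e : p⁻¹ - 1 = (1 - p) / p := by field_simp
    rw [e, abs_div, abs_of_pos (by linarith : 0 < p), div_le_iff₀ (by linarith)]
    have : |1 - p| ≤ δ ^ 2 := by rw [abs_le]; constructor <;> linarith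
    nlinarith [sq_nonneg δ]
  rw [abs_mul]
  calc _ ≤ 9 * (2 * δ ^ 2) := mul_le_mul (MM_bound i j x hx) hd (abs_nonneg _) (by norm_num)
    _ ≤ _ := by nlinarith

theorem exists_fixed {σ : Measure (Euc 3)} (h : RotInv σ) {f : Euc 3 → ℝ} {δ : ℝ} (hδ : 0 < δ)
    (hδ1 : δ ≤ 1 / 4000) (hf : NearNorm f (δ ^ 2)) (hc : Continuous f) :
    ∃ S ∈ closedBall kd (δ / 6), Psi σ f S = S := by
  have hk : kd ∈ closedBall kd (δ / 6) := mem_closedBall_self (by positivity)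
  have hm : Set.MapsTo (Psi σ f) (closedBall kd (δ / 6)) (closedBall kd (δ / 6)) := by
    intro S hS
    have h1 := Psi_contr h hδ hδ1 hf hc S kd hS hk
    have h2 := Psi_one h hδ hδ1 hf hc
    have h3 := dist_triangle (Psi σ f S) (Psi σ f kd) kd
    rw [mem_closedBall] at hS ⊢
    linarith
  have hcon : ContractingWith (1 / 2) (hm.restrict (Psi σ f) _ _) := by
    refine ⟨by rw [← NNReal.coe_lt_coe]; norm_num, LipschitzWith.of_dist_le_mul ?_⟩
    rintro ⟨S, hS⟩ ⟨S', hS'⟩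
    have := Psi_contr h hδ hδ1 hf hc S S' hS hS'
    simpa [Subtype.dist_eq] using this
  obtain ⟨S, hS, hfix, -⟩ := hcon.exists_fixedPoint' isClosed_closedBall.isComplete hm hk
    (edist_ne_top _ _)
  exact ⟨S, hS, hfix⟩

theorem exists_matrix {σ : Measure (Euc 3)} (h : RotInv σ) {f : Euc 3 → ℝ} {δ : ℝ} (hδ : 0 < δ)
    (hδ1 : δ ≤ 1 / 4000) (hf : NearNorm f (δ ^ 2)) (hc : Continuous f) :
    ∃ S ∈ closedBall kd (δ / 6), ∫ x, (f (lin S x))⁻¹ ∂σ = 1 ∧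
      ∀ B : Fin 3 → Fin 3 → ℝ, B 0 0 + B 1 1 + B 2 2 = 0 →
        ∫ x, (f (lin S x))⁻¹ * qf B x ∂σ = 0 := by
  have hp := h.prob
  obtain ⟨S, hS, hfix⟩ := exists_fixed h hδ hδ1 hf hc
  have hδ2 : δ ≤ 1 / 50 := by linarith
  have hsym : ∀ i j, S i j = S j i := by
    intro i j
    rw [← hfix]
    unfold Psi
    simp_rw [MM_symm i j]
  have hz : ∀ i j, ∫ x, MM i j x * dv f S x ∂σ = 0 := by
    intro i j
    have h1 := Psi_eq h hδ hδ2 hf hc S hS i j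
    rw [hfix, h.MM_qf S hsym] at h1
    linarith
  have hi := MM_dv_int h hδ hδ2 hf hc S hS
  have hd := dv_int h hδ hδ2 hf hc S hS
  have hB : ∀ B : Fin 3 → Fin 3 → ℝ, ∫ x, (15 * qf B x - 3 * (B 0 0 + B 1 1 + B 2 2)) / 2
      * dv f S x ∂σ = 0 := by
    intro B
    have e : ∀ x, (15 * qf B x - 3 * (B 0 0 + B 1 1 + B 2 2)) / 2 * dv f S x =
        ∑ i, ∑ j, B i j * (MM i j x * dv f S x) := by
      intro x
      rw [qf_eq]; simp [Fin.sum_univ_three, MM, kd]; ring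
    simp_rw [e]
    rw [integral_finsetSum _ fun i _ => integrable_finsetSum _ fun j _ => (hi i j).const_mul _]
    refine Finset.sum_eq_zero fun i _ => ?_
    rw [integral_finsetSum _ fun j _ => (hi i j).const_mul _]
    refine Finset.sum_eq_zero fun j _ => ?_
    rw [integral_const_mul, hz, mul_zero]
  have h0 : ∫ x, dv f S x ∂σ = 0 := by
    have h1 := hB kd
    have h2 : ∫ x, (15 * qf kd x - 3 * (kd 0 0 + kd 1 1 + kd 2 2)) / 2 * dv f S x ∂σ =
        ∫ x, 3 * dv f S x ∂σ := by
      apply integral_congr_ae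
      filter_upwards [h.ae] with x hx
      have : qf kd x = 1 := by
        unfold qf; rw [lin_kd, real_inner_self_eq_norm_sq, hx]; norm_num
      rw [this]; simp [kd]; left; norm_num
    rw [h2, integral_const_mul] at h1
    linarith
  have hfe : ∀ x, (f (lin S x))⁻¹ = dv f S x + 1 := fun x => by unfold dv; ring
  refine ⟨S, hS, ?_, fun B hBt => ?_⟩
  · simp_rw [hfe]
    rw [integral_add hd (integrable_const _), h0]; simp
  · have h1 := hB B
    rw [hBt] at h1
    have e1 : ∀ x, (15 * qf B x - 3 * 0) / 2 * dv f S x = 15 / 2 * (dv f S x * qf B x) := by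
      intro x; ring
    simp_rw [e1] at h1
    rw [integral_const_mul] at h1
    have h2 : ∫ x, dv f S x * qf B x ∂σ = 0 := by linarith
    simp_rw [hfe, add_mul, one_mul]
    by_cases hint : Integrable (fun x => dv f S x * qf B x) σ
    · rw [integral_add hint (h.integrable_cont (qf_cont B)), h2, h.mom2_qf, hBt]; simp
    · exfalso; apply hint
      obtain ⟨C, hC⟩ := (isCompact_sphere (0 : Euc 3) 1).exists_bound_of_continuousOn
        (qf_cont B).continuousOn
      refine h.integrable ((dv_meas hc S).mul (qf_cont B).measurable) C fun x hx => ?_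
      rw [abs_mul]
      have h3 := dv_bound hδ hδ2 hf S hS x hx
      have h4 : |qf B x| ≤ C := hC x (by simpa using hx)
      nlinarith [abs_nonneg (qf B x)]

theorem nearNorm_gauge {K : Set (Euc 3)} {δ : ℝ} (hδ : 0 < δ) (hδ1 : δ ≤ 1 / 50)
    (hK : Convex ℝ K) (h1 : closedBall 0 (1 - δ ^ 2 / 2) ⊆ K)
    (h2 : K ⊆ closedBall 0 (1 + δ ^ 2 / 2)) : NearNorm (gauge K) (δ ^ 2) := by
  have hr : 0 < 1 - δ ^ 2 / 2 := by nlinarith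
  have hnh : K ∈ nhds (0 : Euc 3) := Filter.mem_of_superset (closedBall_mem_nhds 0 hr) h1
  have hab : Absorbent ℝ K := absorbent_nhds_zero hnh
  refine ⟨gauge_add_le hK hab, fun t u ht => ?_, fun u => ?_, fun u => ?_⟩
  · rw [gauge_smul_of_nonneg ht, smul_eq_mul]
  · have h3 := le_gauge_of_subset_closedBall (x := u) hab (by positivity) h2
    refine le_trans ?_ h3
    rw [le_div_iff₀ (by positivity)]
    have : (1 - δ ^ 2) * (1 + δ ^ 2 / 2) ≤ 1 := by nlinarith [sq_nonneg δ, sq_nonneg (δ ^ 2)]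
    nlinarith [norm_nonneg u]
  · have h3 := mul_gauge_le_norm (x := u) (ball_subset_closedBall.trans h1)
    have h4 : 0 ≤ gauge K u := gauge_nonneg u
    have : 1 ≤ (1 + δ ^ 2) * (1 - δ ^ 2 / 2) := by
      have : δ ^ 2 ≤ 1 := by nlinarith
      nlinarith [sq_nonneg δ]
    nlinarith [sq_nonneg δ]

theorem radFn_image {K : Set (Euc 3)} (hK : Convex ℝ K) (hc : IsClosed K)
    (hnh : K ∈ nhds (0 : Euc 3)) (T : Euc 3 ≃ₗ[ℝ] Euc 3) (x : Euc 3)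
    (hx : 0 < gauge K (T.symm x)) : radFn (⇑T '' K) x = (gauge K (T.symm x))⁻¹ := by
  have : {t : ℝ | 0 ≤ t ∧ t • x ∈ ⇑T '' K} = Set.Icc 0 (gauge K (T.symm x))⁻¹ := by
    ext t
    simp only [Set.mem_ofPred_eq, Set.mem_Icc]
    refine and_congr_right fun ht => ?_
    have h1 : t • x ∈ ⇑T '' K ↔ T.symm (t • x) ∈ K := by
      constructor
      · rintro ⟨y, hy, he⟩; rw [← he]; simpa using hy
      · intro hy; exact ⟨_, hy, by simp⟩
    rw [h1, map_smul]
    have h2 := gauge_le_one_iff_mem_closure (x := t • T.symm x) hK hnh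
    rw [hc.closure_eq] at h2
    rw [← h2, gauge_smul_of_nonneg ht, smul_eq_mul, ← le_div_iff₀ hx, one_div]
  rw [radFn, this, csSup_Icc (by positivity)]

theorem main_small (ε : ℝ) (hε : 0 < ε) (hε1 : ε ≤ 1 / 2) :
    ∃ ε' > (0 : ℝ), ∀ K : Set (Euc 3), IsSymCB K →
      Metric.closedBall 0 (1 - ε') ⊆ K → K ⊆ Metric.closedBall 0 (1 + ε') →
      ∀ σ : Measure (Euc 3), IsProbabilityMeasure σ →
        σ (Metric.sphere (0 : Euc 3) 1)ᶜ = 0 →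
        (∀ U : Euc 3 ≃ₗᵢ[ℝ] Euc 3, Measure.map (⇑U) σ = σ) →
        ∃ T : Euc 3 ≃ₗ[ℝ] Euc 3,
          Metric.closedBall 0 (1 - ε) ⊆ ⇑T '' K ∧
          ⇑T '' K ⊆ Metric.closedBall 0 (1 + ε) ∧
          (∫ x, radFn (⇑T '' K) x ∂σ) = 1 ∧
          ∀ A : Euc 3 →ₗ[ℝ] Euc 3, A.IsSymmetric → LinearMap.trace ℝ (Euc 3) A = 0 →
            (∫ x, radFn (⇑T '' K) x * ⟪x, A x⟫ ∂σ) = 0 := by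
  set δ := ε / 2000 with hδd
  have hδ : 0 < δ := by positivity
  have hδ1 : δ ≤ 1 / 4000 := by rw [hδd]; linarith
  have hεδ : ε = 2000 * δ := by rw [hδd]; ring
  refine ⟨δ ^ 2 / 2, by positivity, ?_⟩
  intro K hKs h1 h2 σ hp hs hinv
  have h : RotInv σ := ⟨hp, hs, hinv⟩
  have hK := hKs.convex
  have hf := nearNorm_gauge hδ (by linarith) hK h1 h2
  have hr : 0 < 1 - δ ^ 2 / 2 := by nlinarith
  have hnh : K ∈ nhds (0 : Euc 3) := Filter.mem_of_superset (closedBall_mem_nhds 0 hr) h1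
  have hcont : Continuous (gauge K) := continuous_gauge hK hnh
  obtain ⟨S, hS, hm, hq⟩ := exists_matrix h hδ hδ1 hf hcont
  have hcl := lin_close S hS
  have hlow : ∀ y, (1 - δ) * ‖y‖ ≤ ‖lin S y‖ := fun y => by
    have a := hcl y
    have b := norm_sub_norm_le y (lin S y)
    rw [norm_sub_rev] at b
    linarith
  have hup : ∀ y, ‖lin S y‖ ≤ (1 + δ) * ‖y‖ := fun y => by
    have a := hcl y
    have b := norm_sub_norm_le (lin S y) y
    linarith
  have hinj : Function.Injective (lin S) := by
    rw [injective_iff_map_eq_zero]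
    intro y hy
    have a := hlow y
    rw [hy, norm_zero] at a
    have : ‖y‖ ≤ 0 := by nlinarith [norm_nonneg y]
    exact norm_le_zero_iff.1 this
  let T : Euc 3 ≃ₗ[ℝ] Euc 3 := (LinearEquiv.ofInjectiveEndo (lin S) hinj).symm
  have hT : ∀ y, T.symm y = lin S y := fun y => rfl
  have hrad : ∀ x : Euc 3, ‖x‖ = 1 → radFn (⇑T '' K) x = (gauge K (lin S x))⁻¹ := by
    intro x hx
    rw [radFn_image hK hKs.compact.isClosed hnh T x, hT]
    rw [hT]
    have a := hf.lower (lin S x)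
    have b := hlow x
    rw [hx] at b
    refine lt_of_lt_of_le (mul_pos ?_ ?_) a <;> nlinarith
  refine ⟨T, ?_, ?_, ?_, ?_⟩
  · intro y hy
    refine ⟨T.symm y, h1 ?_, by simp⟩
    rw [mem_closedBall_zero_iff] at hy ⊢
    rw [hT]
    refine (hup y).trans ?_
    nlinarith [norm_nonneg y]
  · rintro _ ⟨z, hz, rfl⟩
    have a := h2 hz
    rw [mem_closedBall_zero_iff] at a ⊢
    have b := hlow (T z)
    rw [← hT, LinearEquiv.symm_apply_apply] at b
    by_contra hcon
    push Not at hcon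
    nlinarith [norm_nonneg (T z)]
  · rw [← hm]
    apply integral_congr_ae
    filter_upwards [h.ae] with x hx using hrad x hx
  · intro A hA htr
    let B : Fin 3 → Fin 3 → ℝ := fun i j => A (EuclideanSpace.single j 1) i
    have hAB : A = lin B := by
      refine (EuclideanSpace.basisFun (Fin 3) ℝ).toBasis.ext fun j => ?_
      ext i
      rw [lin_apply]
      fin_cases j <;> simp [B]
    have htB : B 0 0 + B 1 1 + B 2 2 = 0 := by
      rw [← htr, LinearMap.trace_eq_matrix_trace ℝ (EuclideanSpace.basisFun (Fin 3) ℝ).toBasis,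
        Matrix.trace, Fin.sum_univ_three]
      simp [LinearMap.toMatrix_apply, B]
    rw [← hq B htB]
    apply integral_congr_ae
    filter_upwards [h.ae] with x hx
    rw [hrad x hx, hAB, qf]

/-- Lemma 4.1: given `ε > 0` there is `ε' > 0` such that every
origin-symmetric convex body `K` with `(1-ε')B³ ⊆ K ⊆ (1+ε')B³` has a linear image
`K' = TK` with `(1-ε)B³ ⊆ K' ⊆ (1+ε)B³` whose radial function has mean `1` and vanishing
second spherical harmonic component (w.r.t. the rotation-invariant probability measure `σ`
on `S²`). -/
theorem exists_linear_image_no_second_harmonic :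
    ∀ ε > (0 : ℝ), ∃ ε' > (0 : ℝ), ∀ K : Set (Euc 3), IsSymCB K →
      Metric.closedBall 0 (1 - ε') ⊆ K → K ⊆ Metric.closedBall 0 (1 + ε') →
      ∀ σ : Measure (Euc 3), IsProbabilityMeasure σ →
        σ (Metric.sphere (0 : Euc 3) 1)ᶜ = 0 →
        (∀ U : Euc 3 ≃ₗᵢ[ℝ] Euc 3, Measure.map (⇑U) σ = σ) →
        ∃ T : Euc 3 ≃ₗ[ℝ] Euc 3,
          Metric.closedBall 0 (1 - ε) ⊆ ⇑T '' K ∧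
          ⇑T '' K ⊆ Metric.closedBall 0 (1 + ε) ∧
          (∫ x, radFn (⇑T '' K) x ∂σ) = 1 ∧
          ∀ A : Euc 3 →ₗ[ℝ] Euc 3, A.IsSymmetric → LinearMap.trace ℝ (Euc 3) A = 0 →
            (∫ x, radFn (⇑T '' K) x * ⟪x, A x⟫ ∂σ) = 0 := by
  intro ε hε
  obtain ⟨ε', hε', H⟩ := main_small (min ε (1 / 2)) (lt_min hε (by norm_num)) (min_le_right _ _)
  refine ⟨ε', hε', fun K hK h1 h2 σ hp hs hinv => ?_⟩
  obtain ⟨T, a, b, c, d⟩ := H K hK h1 h2 σ hp hs hinv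
  have hm : min ε (1 / 2) ≤ ε := min_le_left _ _
  exact ⟨T, (closedBall_subset_closedBall (by linarith)).trans a,
    b.trans (closedBall_subset_closedBall (by linarith)), c, d⟩

end
end

section
/- For l ∈ ℕ let c_l = 1 + 4 P_l(1/2) + P_l(0), where P_l is the degree-l Legendre polynomial normalized so that P_l(1) = 1. Then c_l = 0 if and only if l = 2. Moreover, there exists a constant C > 0 such that |c_l − 1| ≤ C l^{−1/2} for all l ≥ 1. -/
open scoped RealInnerProductSpace
open Metric MeasureTheory

noncomputable section

/-- The Legendre polynomials, via the recurrence
`(l+1)P_{l+1}(t) = (2l+1)tP_l(t) - lP_{l-1}(t)`, `P₀ = 1`, `P₁(t) = t`. -/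
def legendreP : ℕ → ℝ → ℝ
  | 0, _ => 1
  | 1, t => t
  | l + 2, t =>
      ((2 * (l : ℝ) + 3) * t * legendreP (l + 1) t - ((l : ℝ) + 1) * legendreP l t) /
        ((l : ℝ) + 2)

theorem legendreP_add_two (l : ℕ) (t : ℝ) : legendreP (l + 2) t =
      ((2 * (l : ℝ) + 3) * t * legendreP (l + 1) t - ((l : ℝ) + 1) * legendreP l t) /
        ((l : ℝ) + 2) := by
  rw [legendreP]

/-- Algebraic step of the energy estimate at `t = 1/2`. -/
theorem energy_step_half (m x y z : ℝ) (hm : 0 ≤ m)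
    (hz : z = ((2 * m + 5) * (1 / 2) * y - (m + 2) * x) / (m + 3)) :
    (m + 2) * (m + 4) * ((m + 7 / 2) * z ^ 2 + (m + 5 / 2) * y ^ 2 - (m + 3) * y * z) ≤
      (m + 3) ^ 2 * ((m + 5 / 2) * y ^ 2 + (m + 3 / 2) * x ^ 2 - (m + 2) * x * y) := by
  obtain ⟨w, rfl⟩ : ∃ w, x = w + y / 2 := ⟨x - y / 2, by ring⟩
  have h3 : (0 : ℝ) < m + 3 := by linarith
  set A : ℝ := 2 * (m + 3) ^ 2 * (m + 3 / 2) - (m + 2) * (m + 4) with hA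
  set B : ℝ := (m + 3) ^ 2 + (m + 2) * (m + 4) * (m + 3) with hB
  set C : ℝ := 2 * (m + 3) ^ 2 * (3 / 4 * (m + 2) + 3 / 8) with hC
  have hApos : 0 < A := by rw [hA]; ring_nf; positivity
  have hdisc : 0 ≤ 4 * A * C - B ^ 2 := by
    rw [hA, hB, hC]; ring_nf; positivity
  have hq : 0 ≤ A * w ^ 2 - B * (y * w) + C * y ^ 2 := by
    have h4 : 0 ≤ (4 * A) * (A * w ^ 2 - B * (y * w) + C * y ^ 2) := by
      have : (4 * A) * (A * w ^ 2 - B * (y * w) + C * y ^ 2)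
        = (2 * A * w - B * y) ^ 2 + (4 * A * C - B ^ 2) * y ^ 2 := by ring
      rw [this]; positivity
    exact nonneg_of_mul_nonneg_right h4 (by positivity)
  have key : (m + 3) ^ 2 * ((m + 5 / 2) * y ^ 2 + (m + 3 / 2) * (w + y / 2) ^ 2
        - (m + 2) * (w + y / 2) * y)
      - (m + 2) * (m + 4) * ((m + 7 / 2) * z ^ 2 + (m + 5 / 2) * y ^ 2 - (m + 3) * y * z)
      = (A * w ^ 2 - B * (y * w) + C * y ^ 2) / (2 * (m + 3) ^ 2) := by
    rw [hz, hA, hB, hC]; field_simp; ring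
  have : 0 ≤ (A * w ^ 2 - B * (y * w) + C * y ^ 2) / (2 * (m + 3) ^ 2) := by positivity
  linarith

theorem energy_half (k : ℕ) :
    ((k : ℝ) + 3) * (((k : ℝ) + 5 / 2) * legendreP (k + 2) (1 / 2) ^ 2
      + ((k : ℝ) + 3 / 2) * legendreP (k + 1) (1 / 2) ^ 2
      - ((k : ℝ) + 2) * legendreP (k + 1) (1 / 2) * legendreP (k + 2) (1 / 2))
      ≤ 81 / 100 * ((k : ℝ) + 2) := by
  induction k with
  | zero => norm_num [legendreP]
  | succ k ih =>
    have hk : (0 : ℝ) ≤ k := k.cast_nonneg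
    have hz := legendreP_add_two (k + 1) (1 / 2)
    have st := energy_step_half k (legendreP (k + 1) (1 / 2)) (legendreP (k + 2) (1 / 2))
      (legendreP (k + 3) (1 / 2)) hk (by rw [hz]; push_cast; ring_nf)
    have e1 : k + 1 + 2 = k + 3 := rfl
    have e2 : k + 1 + 1 = k + 2 := rfl
    rw [e1, e2]
    push_cast
    have h2 : (0 : ℝ) < k + 2 := by linarith
    refine le_of_mul_le_mul_left ?_ h2
    have ih' := mul_le_mul_of_nonneg_left ih (by linarith : (0 : ℝ) ≤ k + 3)
    ring_nf at st ih' ⊢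
    linarith

theorem bound_half (k : ℕ) :
    legendreP (k + 2) (1 / 2) ^ 2 * ((k : ℝ) + 2) ≤ 121 / 100 := by
  have h := energy_half k
  have hk : (0 : ℝ) ≤ k := k.cast_nonneg
  set y := legendreP (k + 2) (1 / 2)
  set x := legendreP (k + 1) (1 / 2)
  have h1 : 7 / 10 * ((k : ℝ) + 2) * y ^ 2 ≤ ((k : ℝ) + 5 / 2) * y ^ 2
      + ((k : ℝ) + 3 / 2) * x ^ 2 - ((k : ℝ) + 2) * x * y := by
    have : (((k : ℝ) + 5 / 2) * y ^ 2
      + ((k : ℝ) + 3 / 2) * x ^ 2 - ((k : ℝ) + 2) * x * y - 7 / 10 * ((k : ℝ) + 2) * y ^ 2)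
       * (4 * ((k : ℝ) + 3 / 2)) = (2 * ((k : ℝ) + 3 / 2) * x - ((k : ℝ) + 2) * y) ^ 2
        + (1 / 5 * (k : ℝ) ^ 2 + 11 / 5 * k + 13 / 5) * y ^ 2 := by ring
    have h5 : 0 ≤ (((k : ℝ) + 5 / 2) * y ^ 2
      + ((k : ℝ) + 3 / 2) * x ^ 2 - ((k : ℝ) + 2) * x * y - 7 / 10 * ((k : ℝ) + 2) * y ^ 2)
       * (4 * ((k : ℝ) + 3 / 2)) := by rw [this]; positivity
    have := nonneg_of_mul_nonneg_left h5 (by positivity)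
    linarith
  have h2 := mul_le_mul_of_nonneg_left h1 (by linarith : (0 : ℝ) ≤ k + 3)
  have h3 := h2.trans h
  have h4 : ((k : ℝ) + 3) * (y ^ 2 * 7 / 10) ≤ 81 / 100 :=
    le_of_mul_le_mul_right (by linarith : ((k : ℝ) + 3) * (y ^ 2 * 7 / 10) * (k + 2) ≤
      81 / 100 * ((k : ℝ) + 2)) (by linarith)
  nlinarith [sq_nonneg y]

theorem energy_zero (k : ℕ) :
    ((k : ℝ) + 2) * (((k : ℝ) + 3 / 2) * legendreP (k + 1) 0 ^ 2
      + ((k : ℝ) + 1 / 2) * legendreP k 0 ^ 2) ≤ (k : ℝ) + 1 := by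
  induction k with
  | zero => norm_num [legendreP]
  | succ k ih =>
    have hk : (0 : ℝ) ≤ k := k.cast_nonneg
    have hz := legendreP_add_two k 0
    have e1 : k + 1 + 1 = k + 2 := rfl
    rw [e1]
    push_cast
    set x := legendreP k 0
    set y := legendreP (k + 1) 0
    have h1 : (0 : ℝ) < k + 1 := by linarith
    have key : ((k : ℝ) + 2) ^ 2 * (((k : ℝ) + 3 / 2) * y ^ 2 + ((k : ℝ) + 1 / 2) * x ^ 2)
      - ((k : ℝ) + 1) * ((k + 3) * (((k : ℝ) + 5 / 2) * legendreP (k + 2) 0 ^ 2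
        + ((k : ℝ) + 3 / 2) * y ^ 2)) = ((k : ℝ) + 3 / 2) * y ^ 2 +
        (2 * ((k : ℝ) + 2) ^ 2 * (k + 1 / 2) - (k + 1) * (k + 3)) / (2 * ((k : ℝ) + 2) ^ 2)
          * x ^ 2 := by
      rw [hz]; field_simp; ring
    have hp : 0 ≤ 2 * ((k : ℝ) + 2) ^ 2 * (k + 1 / 2) - (k + 1) * (k + 3) := by
      ring_nf; positivity
    have hp2 : 0 ≤ ((k : ℝ) + 3 / 2) * y ^ 2 +
        (2 * ((k : ℝ) + 2) ^ 2 * (k + 1 / 2) - (k + 1) * (k + 3)) / (2 * ((k : ℝ) + 2) ^ 2)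
          * x ^ 2 := by positivity
    refine le_of_mul_le_mul_left ?_ h1
    have ih' := mul_le_mul_of_nonneg_left ih (by linarith : (0 : ℝ) ≤ k + 2)
    ring_nf at key hp2 ih' ⊢
    linarith

theorem bound_zero (k : ℕ) :
    legendreP (k + 1) 0 ^ 2 * ((k : ℝ) + 1) ≤ 1 := by
  have h := energy_zero k
  have hk : (0 : ℝ) ≤ k := k.cast_nonneg
  set y := legendreP (k + 1) 0
  set x := legendreP k 0
  have h1 : ((k : ℝ) + 1) * y ^ 2 ≤ ((k : ℝ) + 3 / 2) * y ^ 2 + ((k : ℝ) + 1 / 2) * x ^ 2 := by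
    have : 0 ≤ 1 / 2 * y ^ 2 + ((k : ℝ) + 1 / 2) * x ^ 2 := by positivity
    linarith
  have h2 := mul_le_mul_of_nonneg_left h1 (by linarith : (0 : ℝ) ≤ k + 2)
  have h3 : ((k : ℝ) + 2) * y ^ 2 ≤ 1 :=
    le_of_mul_le_mul_right (by linarith : ((k : ℝ) + 2) * y ^ 2 * (k + 1) ≤
      1 * ((k : ℝ) + 1)) (by linarith)
  nlinarith [sq_nonneg y]

theorem total_bound (l : ℕ) (hl : 1 ≤ l) :
    |4 * legendreP l (1 / 2) + legendreP l 0| * √(l : ℝ) ≤ 27 / 5 := by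
  have hs : √(l : ℝ) ^ 2 = l := Real.sq_sqrt l.cast_nonneg
  have hs0 := Real.sqrt_nonneg (l : ℝ)
  have ha : |legendreP l (1 / 2) * √(l : ℝ)| ≤ 11 / 10 := by
    apply abs_le_of_sq_le_sq _ (by norm_num)
    rw [mul_pow, hs]
    obtain rfl | h2 := hl.eq_or_lt
    · norm_num [legendreP]
    · obtain ⟨k, rfl⟩ := Nat.exists_eq_add_of_le' h2
      have := bound_half k
      push_cast
      norm_num at this ⊢
      linarith
  have hb : |legendreP l 0 * √(l : ℝ)| ≤ 1 := by
    apply abs_le_of_sq_le_sq _ (by norm_num)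
    rw [mul_pow, hs]
    obtain ⟨k, rfl⟩ := Nat.exists_eq_add_of_le' hl
    have := bound_zero k
    push_cast
    linarith
  rw [← abs_of_nonneg hs0, ← abs_mul]
  rw [abs_le] at ha hb ⊢
  constructor <;> linarith [ha.1, ha.2, hb.1, hb.2]

theorem small_cases (l : ℕ) (hl : l < 30) (h2 : l ≠ 2) :
    1 + 4 * legendreP l (1 / 2) + legendreP l 0 ≠ 0 := by
  have a0 : legendreP 0 (1 / 2) = 1 := by norm_num [legendreP]
  have a1 : legendreP 1 (1 / 2) = 1/2 := by norm_num [legendreP]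
  have a2 : legendreP 2 (1 / 2) = -1/8 := by
    rw [legendreP_add_two, a1, a0]; norm_num
  have a3 : legendreP 3 (1 / 2) = -7/16 := by
    rw [legendreP_add_two, a2, a1]; norm_num
  have a4 : legendreP 4 (1 / 2) = -37/128 := by
    rw [legendreP_add_two, a3, a2]; norm_num
  have a5 : legendreP 5 (1 / 2) = 23/256 := by
    rw [legendreP_add_two, a4, a3]; norm_num
  have a6 : legendreP 6 (1 / 2) = 331/1024 := by
    rw [legendreP_add_two, a5, a4]; norm_num
  have a7 : legendreP 7 (1 / 2) = 457/2048 := by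
    rw [legendreP_add_two, a6, a5]; norm_num
  have a8 : legendreP 8 (1 / 2) = -2413/32768 := by
    rw [legendreP_add_two, a7, a6]; norm_num
  have a9 : legendreP 9 (1 / 2) = -17557/65536 := by
    rw [legendreP_add_two, a8, a7]; norm_num
  have a10 : legendreP 10 (1 / 2) = -49343/262144 := by
    rw [legendreP_add_two, a9, a8]; norm_num
  have a11 : legendreP 11 (1 / 2) = 33487/524288 := by
    rw [legendreP_add_two, a10, a9]; norm_num
  have a12 : legendreP 12 (1 / 2) = 980431/4194304 := by
    rw [legendreP_add_two, a11, a10]; norm_num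
  have a13 : legendreP 13 (1 / 2) = 1390867/8388608 := by
    rw [legendreP_add_two, a12, a11]; norm_num
  have a14 : legendreP 14 (1 / 2) = -1918429/33554432 := by
    rw [legendreP_add_two, a13, a12]; norm_num
  have a15 : legendreP 15 (1 / 2) = -14094103/67108864 := by
    rw [legendreP_add_two, a14, a13]; norm_num
  have a16 : legendreP 16 (1 / 2) = -321811453/2147483648 := by
    rw [legendreP_add_two, a15, a14]; norm_num
  have a17 : legendreP 17 (1 / 2) = 224269619/4294967296 := by
    rw [legendreP_add_two, a16, a15]; norm_num
  have a18 : legendreP 18 (1 / 2) = 3303623941/17179869184 := by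
    rw [legendreP_add_two, a17, a16]; norm_num
  have a19 : legendreP 19 (1 / 2) = 4733645299/34359738368 := by
    rw [legendreP_add_two, a18, a17]; norm_num
  have a20 : legendreP 20 (1 / 2) = -13292650571/274877906944 := by
    rw [legendreP_add_two, a19, a18]; norm_num
  have a21 : legendreP 21 (1 / 2) = -98084055671/549755813888 := by
    rw [legendreP_add_two, a20, a19]; norm_num
  have a22 : legendreP 22 (1 / 2) = -281911976899/2199023255552 := by
    rw [legendreP_add_two, a21, a20]; norm_num
  have a23 : legendreP 23 (1 / 2) = 198989340767/4398046511104 := by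
    rw [legendreP_add_two, a22, a21]; norm_num
  have a24 : legendreP 24 (1 / 2) = 11762800296919/70368744177664 := by
    rw [legendreP_add_two, a23, a22]; norm_num
  have a25 : legendreP 25 (1 / 2) = 16942136033599/140737488355328 := by
    rw [legendreP_add_two, a24, a23]; norm_num
  have a26 : legendreP 26 (1 / 2) = -24017776306027/562949953421312 := by
    rw [legendreP_add_two, a25, a24]; norm_num
  have a27 : legendreP 27 (1 / 2) = -177663201452149/1125899906842624 := by
    rw [legendreP_add_two, a26, a25]; norm_num
  have a28 : legendreP 28 (1 / 2) = -1025365176973897/9007199254740992 := by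
    rw [legendreP_add_two, a27, a26]; norm_num
  have a29 : legendreP 29 (1 / 2) = 729217212518987/18014398509481984 := by
    rw [legendreP_add_two, a28, a27]; norm_num
  have b0 : legendreP 0 0 = 1 := by norm_num [legendreP]
  have b1 : legendreP 1 0 = 0 := by norm_num [legendreP]
  have b2 : legendreP 2 0 = -1/2 := by
    rw [legendreP_add_two, b1, b0]; norm_num
  have b3 : legendreP 3 0 = 0 := by
    rw [legendreP_add_two, b2, b1]; norm_num
  have b4 : legendreP 4 0 = 3/8 := by
    rw [legendreP_add_two, b3, b2]; norm_num
  have b5 : legendreP 5 0 = 0 := by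
    rw [legendreP_add_two, b4, b3]; norm_num
  have b6 : legendreP 6 0 = -5/16 := by
    rw [legendreP_add_two, b5, b4]; norm_num
  have b7 : legendreP 7 0 = 0 := by
    rw [legendreP_add_two, b6, b5]; norm_num
  have b8 : legendreP 8 0 = 35/128 := by
    rw [legendreP_add_two, b7, b6]; norm_num
  have b9 : legendreP 9 0 = 0 := by
    rw [legendreP_add_two, b8, b7]; norm_num
  have b10 : legendreP 10 0 = -63/256 := by
    rw [legendreP_add_two, b9, b8]; norm_num
  have b11 : legendreP 11 0 = 0 := by
    rw [legendreP_add_two, b10, b9]; norm_num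
  have b12 : legendreP 12 0 = 231/1024 := by
    rw [legendreP_add_two, b11, b10]; norm_num
  have b13 : legendreP 13 0 = 0 := by
    rw [legendreP_add_two, b12, b11]; norm_num
  have b14 : legendreP 14 0 = -429/2048 := by
    rw [legendreP_add_two, b13, b12]; norm_num
  have b15 : legendreP 15 0 = 0 := by
    rw [legendreP_add_two, b14, b13]; norm_num
  have b16 : legendreP 16 0 = 6435/32768 := by
    rw [legendreP_add_two, b15, b14]; norm_num
  have b17 : legendreP 17 0 = 0 := by
    rw [legendreP_add_two, b16, b15]; norm_num
  have b18 : legendreP 18 0 = -12155/65536 := by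
    rw [legendreP_add_two, b17, b16]; norm_num
  have b19 : legendreP 19 0 = 0 := by
    rw [legendreP_add_two, b18, b17]; norm_num
  have b20 : legendreP 20 0 = 46189/262144 := by
    rw [legendreP_add_two, b19, b18]; norm_num
  have b21 : legendreP 21 0 = 0 := by
    rw [legendreP_add_two, b20, b19]; norm_num
  have b22 : legendreP 22 0 = -88179/524288 := by
    rw [legendreP_add_two, b21, b20]; norm_num
  have b23 : legendreP 23 0 = 0 := by
    rw [legendreP_add_two, b22, b21]; norm_num
  have b24 : legendreP 24 0 = 676039/4194304 := by
    rw [legendreP_add_two, b23, b22]; norm_num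
  have b25 : legendreP 25 0 = 0 := by
    rw [legendreP_add_two, b24, b23]; norm_num
  have b26 : legendreP 26 0 = -1300075/8388608 := by
    rw [legendreP_add_two, b25, b24]; norm_num
  have b27 : legendreP 27 0 = 0 := by
    rw [legendreP_add_two, b26, b25]; norm_num
  have b28 : legendreP 28 0 = 5014575/33554432 := by
    rw [legendreP_add_two, b27, b26]; norm_num
  have b29 : legendreP 29 0 = 0 := by
    rw [legendreP_add_two, b28, b27]; norm_num
  interval_cases l
  · rw [a0, b0]; norm_num
  · rw [a1, b1]; norm_num
  · exact absurd rfl h2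
  · rw [a3, b3]; norm_num
  · rw [a4, b4]; norm_num
  · rw [a5, b5]; norm_num
  · rw [a6, b6]; norm_num
  · rw [a7, b7]; norm_num
  · rw [a8, b8]; norm_num
  · rw [a9, b9]; norm_num
  · rw [a10, b10]; norm_num
  · rw [a11, b11]; norm_num
  · rw [a12, b12]; norm_num
  · rw [a13, b13]; norm_num
  · rw [a14, b14]; norm_num
  · rw [a15, b15]; norm_num
  · rw [a16, b16]; norm_num
  · rw [a17, b17]; norm_num
  · rw [a18, b18]; norm_num
  · rw [a19, b19]; norm_num
  · rw [a20, b20]; norm_num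
  · rw [a21, b21]; norm_num
  · rw [a22, b22]; norm_num
  · rw [a23, b23]; norm_num
  · rw [a24, b24]; norm_num
  · rw [a25, b25]; norm_num
  · rw [a26, b26]; norm_num
  · rw [a27, b27]; norm_num
  · rw [a28, b28]; norm_num
  · rw [a29, b29]; norm_num

/-- Lemma 4.2: with `c_l = 1 + 4P_l(1/2) + P_l(0)`, one has `c_l = 0`
iff `l = 2`, and `|c_l - 1| ≤ C l^{-1/2}` for all `l ≥ 1`. -/
theorem legendre_coefficient_lemma :
    (∀ l : ℕ, 1 + 4 * legendreP l (1 / 2) + legendreP l 0 = 0 ↔ l = 2) ∧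
    ∃ C > (0 : ℝ), ∀ l : ℕ, 1 ≤ l →
      |1 + 4 * legendreP l (1 / 2) + legendreP l 0 - 1| ≤ C * (l : ℝ) ^ (-(1 / 2) : ℝ) := by
  refine ⟨fun l => ⟨fun h => ?_, ?_⟩, 27 / 5, by norm_num, fun l hl => ?_⟩
  · by_contra h2
    rcases lt_or_ge l 30 with h30 | h30
    · exact small_cases l h30 h2 h
    · have hb := total_bound l (by omega)
      have h1 : 4 * legendreP l (1 / 2) + legendreP l 0 = -1 := by linarith
      rw [h1] at hb
      norm_num at hb
      have : (5.45 : ℝ) ≤ √(l : ℝ) := by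
        apply Real.le_sqrt_of_sq_le
        have : (30 : ℝ) ≤ l := by exact_mod_cast h30
        norm_num; linarith
      norm_num at this
      linarith
  · rintro rfl
    norm_num [legendreP]
  · have hb := total_bound l hl
    have hpos : (0 : ℝ) < l := by exact_mod_cast hl
    have hs := Real.sqrt_pos.mpr hpos
    rw [Real.rpow_neg hpos.le, ← Real.sqrt_eq_rpow, ← div_eq_mul_inv, le_div_iff₀ hs]
    have e : 1 + 4 * legendreP l (1 / 2) + legendreP l 0 - 1
      = 4 * legendreP l (1 / 2) + legendreP l 0 := by ring
    rw [e]
    exact hb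

end
end
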